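/- Let 1<p<∞ and N = 2. For n ∈ ℕ, let γ_n(t) = (t, (1+cos t)/(n+1)) for t ∈ (−π,π) and γ_n(t) = (t,0) for |t| ≥ π, let Γ_n be its arc-length reparametrization with Γ_n(0) = γ_n(0), let ν_n(s) be a unit normal to Γ_n, and set Ω_n = {Γ_n(s) + t ν_n(s) : s ∈ ℝ, t ∈ (−1/2,1/2)}. Suppose for each n that L_n > π is chosen so that the bounded open set O_n := Ω_n ∩ ((−L_n,L_n) × ℝ) satisfies λ_{1,p}(O_n) < (π_p)^p. Set Õ_n := Ω_n ∩ ([−L_n,L_n] × ℝ), τ_0 := L_0, τ_n := 2(L_0 + … + L_{n−1}) + L_n for n ≥ 1, and define Ω := ((−∞,0) × (−1/2,1/2)) ∪ ⋃_{n=0}^∞ (Õ_n + τ_n e_1), where e_1 = (1,0). Then: (1) E_p(Ω) = (π_p)^p; and (2) λ_{k,p}^{LS}(Ω) < E_p(Ω) for every k ∈ ℕ\{0}. -/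

import Mathlib

open MeasureTheory Filter Topology Metric Set ENNReal
open scoped RealInnerProductSpace

noncomputable section

/-- Euclidean space `ℝ^N`. -/
abbrev EucN (N : ℕ) := EuclideanSpace ℝ (Fin N)

/-- A test function on an open set `Ω ⊆ ℝ^N`: smooth, with compact support contained in `Ω`. -/
def IsTestFun {N : ℕ} (Ω : Set (EucN N)) (φ : EucN N → ℝ) : Prop :=
  ContDiff ℝ (⊤ : ℕ∞) φ ∧ HasCompactSupport φ ∧ tsupport φ ⊆ Ω

/-- Pairs `(u, g)` in `L^q × L^q`, thought of as a function together with its (weak) gradient. -/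
abbrev SobPair (N : ℕ) (q : ℝ≥0∞) :=
  Lp ℝ q (volume : Measure (EucN N)) × Lp (EucN N) q (volume : Measure (EucN N))

/-- A pair given (a.e.) by a test function and its gradient. -/
def IsTestPair {N : ℕ} (q : ℝ≥0∞) (Ω : Set (EucN N)) (w : SobPair N q) : Prop :=
  ∃ ψ : EucN N → ℝ, IsTestFun Ω ψ ∧ (⇑w.1 =ᵐ[volume] ψ) ∧
    (⇑w.2 =ᵐ[volume] fun x => gradient ψ x)

theorem fact_one_le_ofReal {p : ℝ} (hp : 1 ≤ p) : Fact (1 ≤ ENNReal.ofReal p) :=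
  ⟨ENNReal.one_le_ofReal.mpr hp⟩

/-- The Sobolev space `W^{1,p}_0(Ω)`, realized as the closure in `L^p × L^p` of the set of
pairs (test function, its gradient). -/
def W10 (N : ℕ) (p : ℝ) (hp : 1 ≤ p) (Ω : Set (EucN N)) :
    Set (SobPair N (ENNReal.ofReal p)) :=
  letI := fact_one_le_ofReal hp
  closure {w | IsTestPair (ENNReal.ofReal p) Ω w}

/-- The first eigenvalue `λ_{1,p}(Ω)` (as an extended real, `∞` if there are no admissible
functions). -/
def lambda1p (N : ℕ) (p : ℝ) (hp : 1 ≤ p) (Ω : Set (EucN N)) : ℝ≥0∞ :=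
  sInf {t | ∃ w ∈ W10 N p hp Ω, (∫ x, |w.1 x| ^ p) = 1 ∧
    t = ENNReal.ofReal (∫ x, ‖w.2 x‖ ^ p)}

/-- The `L^p` Poincaré constant "at infinity" `E_p(Ω)`. -/
def Einfty (N : ℕ) (p : ℝ) (hp : 1 ≤ p) (Ω : Set (EucN N)) : ℝ≥0∞ :=
  ⨆ R ∈ Set.Ioi (0 : ℝ), lambda1p N p hp (Ω \ closure (ball (0 : EucN N) R))

/-- There is a continuous odd map from `A` to the unit sphere `S^{j-1} ⊆ ℝ^j`. -/
def HasOddMapToSphere {Z : Type*} [NormedAddCommGroup Z] (A : Set Z) (j : ℕ) : Prop :=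
  ∃ f : Z → EuclideanSpace ℝ (Fin j),
    ContinuousOn f A ∧ (∀ x ∈ A, ‖f x‖ = 1) ∧ ∀ x ∈ A, f (-x) = -f x

/-- The Krasnosel'skii genus of `A` is at least `k`. -/
def genusGE {Z : Type*} [NormedAddCommGroup Z] (A : Set Z) (k : ℕ) : Prop :=
  ∀ j : ℕ, HasOddMapToSphere A j → k ≤ j

/-- The Krasnosel'skii genus of `A`, valued in `ℕ∞`. -/
def genus {Z : Type*} [NormedAddCommGroup Z] (A : Set Z) : ℕ∞ :=
  sInf {k : ℕ∞ | ∃ j : ℕ, (j : ℕ∞) = k ∧ HasOddMapToSphere A j}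

/-- The class `𝒲_{k,p}(Ω)` of compact symmetric subsets of `S_p(Ω) ∩ W^{1,p}_0(Ω)` with
genus at least `k`. -/
def SobClass (N : ℕ) (p : ℝ) (hp : 1 ≤ p) (Ω : Set (EucN N)) (k : ℕ) :
    Set (Set (SobPair N (ENNReal.ofReal p))) :=
  letI := fact_one_le_ofReal hp
  {K | K ⊆ W10 N p hp Ω ∧ (∀ w ∈ K, (∫ x, |w.1 x| ^ p) = 1) ∧
       (∀ w ∈ K, -w ∈ K) ∧ IsCompact K ∧ genusGE K k}

/-- The `k`-th minmax Ljusternik–Schnirelmann value `λ_{k,p}^{LS}(Ω)`. -/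
def lambdaLS (N : ℕ) (p : ℝ) (hp : 1 ≤ p) (Ω : Set (EucN N)) (k : ℕ) : ℝ≥0∞ :=
  ⨅ K ∈ SobClass N p hp Ω k, ⨆ w ∈ K, ENNReal.ofReal (∫ x, ‖w.2 x‖ ^ p)

/-- `w = (u, ∇u)` is an eigenfunction of the Dirichlet `p`-Laplacian on `Ω` associated to the
eigenvalue `lam`. -/
def IsEigenfunction (N : ℕ) (p : ℝ) (hp : 1 ≤ p) (Ω : Set (EucN N)) (lam : ℝ)
    (w : SobPair N (ENNReal.ofReal p)) : Prop :=
  w ∈ W10 N p hp Ω ∧ w ≠ 0 ∧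
  ∀ φ : EucN N → ℝ, IsTestFun Ω φ →
    (∫ x, ‖w.2 x‖ ^ (p - 2) * ⟪w.2 x, gradient φ x⟫) =
      lam * ∫ x, |w.1 x| ^ (p - 2) * (w.1 x) * φ x

/-- `lam` is an eigenvalue of the Dirichlet `p`-Laplacian on `Ω`. -/
def IsEigenvalue (N : ℕ) (p : ℝ) (hp : 1 ≤ p) (Ω : Set (EucN N)) (lam : ℝ) : Prop :=
  ∃ w, IsEigenfunction N p hp Ω lam w

/-- `v = (v, ∇v)` is a non-negative weak subsolution of `-Δ_p u = lam · u^{p-1}` in `Ω`. -/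
def IsSubsolution (N : ℕ) (p : ℝ) (hp : 1 ≤ p) (Ω : Set (EucN N)) (lam : ℝ)
    (v : SobPair N (ENNReal.ofReal p)) : Prop :=
  v ∈ W10 N p hp Ω ∧ (∀ᵐ x, 0 ≤ v.1 x) ∧
  ∀ φ ∈ W10 N p hp Ω, (∀ᵐ x, 0 ≤ φ.1 x) →
    (∫ x, ‖v.2 x‖ ^ (p - 2) * ⟪v.2 x, φ.2 x⟫) ≤ lam * ∫ x, (v.1 x) ^ (p - 1) * φ.1 x

/-- A strongly confining potential. -/
def StronglyConfining (N : ℕ) (V : EucN N → ℝ) : Prop :=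
  LocallyIntegrable V volume ∧ (∀ᵐ x, 0 ≤ V x) ∧
  ∃ α : ℝ → ℝ, (∀ R > (0 : ℝ), 0 < α R) ∧ MonotoneOn α (Set.Ioi 0) ∧
    Tendsto α atTop atTop ∧
    ∀ R > (0 : ℝ), ∀ᵐ x, x ∉ ball (0 : EucN N) R → α R ≤ V x

/-- Triples `(u, g, h)` in `L^q × L^q × L^q`; `h` plays the role of `V^{1/p} u` in the weighted
Sobolev space. -/
abbrev SobTriple (N : ℕ) (q : ℝ≥0∞) :=
  Lp ℝ q (volume : Measure (EucN N)) × Lp (EucN N) q (volume : Measure (EucN N)) ×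
    Lp ℝ q (volume : Measure (EucN N))

/-- A triple given (a.e.) by a test function, its gradient, and `V^{1/p}` times it. -/
def IsTestTriple {N : ℕ} (q : ℝ≥0∞) (p : ℝ) (Ω : Set (EucN N)) (V : EucN N → ℝ)
    (w : SobTriple N q) : Prop :=
  ∃ ψ : EucN N → ℝ, IsTestFun Ω ψ ∧ (⇑w.1 =ᵐ[volume] ψ) ∧
    (⇑w.2.1 =ᵐ[volume] fun x => gradient ψ x) ∧
    (⇑w.2.2 =ᵐ[volume] fun x => (V x) ^ (1/p) * ψ x)

/-- The weighted Sobolev space `W^{1,p}_0(Ω; V)`, realized as a closure of triples coming from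
test functions; the norm topology of `L^p × L^p × L^p` on such triples corresponds exactly to
the weighted Sobolev norm `(∫|∇u|^p + ∫(1+V)|u|^p)^{1/p}`. -/
def W10V (N : ℕ) (p : ℝ) (hp : 1 ≤ p) (Ω : Set (EucN N)) (V : EucN N → ℝ) :
    Set (SobTriple N (ENNReal.ofReal p)) :=
  letI := fact_one_le_ofReal hp
  closure {w | IsTestTriple (ENNReal.ofReal p) p Ω V w}

/-- The class `𝒲_{k,p}(Ω; V)` for the weighted space. -/
def SobClassV (N : ℕ) (p : ℝ) (hp : 1 ≤ p) (Ω : Set (EucN N)) (V : EucN N → ℝ) (k : ℕ) :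
    Set (Set (SobTriple N (ENNReal.ofReal p))) :=
  letI := fact_one_le_ofReal hp
  {K | K ⊆ W10V N p hp Ω V ∧ (∀ w ∈ K, (∫ x, |w.1 x| ^ p) = 1) ∧
       (∀ w ∈ K, -w ∈ K) ∧ IsCompact K ∧ genusGE K k}

/-- The perturbed minmax value `λ_{k,p}^{LS}(Ω; ε V)`, for the functional
`G(φ) = ∫|∇φ|^p + ε ∫ V |φ|^p`. -/
def lambdaLSV (N : ℕ) (p : ℝ) (hp : 1 ≤ p) (Ω : Set (EucN N)) (V : EucN N → ℝ)
    (ε : ℝ) (k : ℕ) : ℝ≥0∞ :=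
  ⨅ K ∈ SobClassV N p hp Ω V k, ⨆ w ∈ K,
    ENNReal.ofReal ((∫ x, ‖w.2.1 x‖ ^ p) + ε * ∫ x, |w.2.2 x| ^ p)

/-- `w` is a constrained critical point, at level `lam`, of the perturbed functional
`G(φ) = ∫|∇φ|^p + ε ∫ V |φ|^p` on the unit sphere of `L^p`. -/
def IsCriticalV (N : ℕ) (p : ℝ) (hp : 1 ≤ p) (Ω : Set (EucN N)) (V : EucN N → ℝ)
    (ε : ℝ) (lam : ℝ) (w : SobTriple N (ENNReal.ofReal p)) : Prop :=
  w ∈ W10V N p hp Ω V ∧ (∫ x, |w.1 x| ^ p) = 1 ∧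
  ∀ φ : EucN N → ℝ, IsTestFun Ω φ →
    (∫ x, ‖w.2.1 x‖ ^ (p - 2) * ⟪w.2.1 x, gradient φ x⟫)
      + ε * ∫ x, V x * |w.1 x| ^ (p - 2) * (w.1 x) * φ x
    = lam * ∫ x, |w.1 x| ^ (p - 2) * (w.1 x) * φ x

/-- The embedding `W^{1,p}_0(Ω) ↪ L^p(Ω)` is compact: every bounded sequence in `W^{1,p}_0(Ω)`
has a subsequence converging strongly in `L^p`. -/
def CompactSobolevEmbedding (N : ℕ) (p : ℝ) (hp : 1 ≤ p) (Ω : Set (EucN N)) : Prop :=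
  ∀ w : ℕ → SobPair N (ENNReal.ofReal p), (∀ n, w n ∈ W10 N p hp Ω) →
    (∃ M : ℝ≥0∞, M ≠ ⊤ ∧ ∀ n, eLpNorm (⇑(w n).1) (ENNReal.ofReal p) volume ≤ M ∧
        eLpNorm (⇑(w n).2) (ENNReal.ofReal p) volume ≤ M) →
    ∃ σ : ℕ → ℕ, StrictMono σ ∧ ∃ u : EucN N → ℝ, MemLp u (ENNReal.ofReal p) volume ∧
      Tendsto (fun n => eLpNorm (⇑(w (σ n)).1 - u) (ENNReal.ofReal p) volume) atTop (𝓝 0)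


/-- A point of `ℝ²` from its two coordinates. -/
noncomputable def pt2 (a b : ℝ) : EucN 2 := (EuclideanSpace.equiv (Fin 2) ℝ).symm ![a, b]

/-- The curve `γ_n` generating the "infinite whip". -/
noncomputable def whipCurve (n : ℕ) (t : ℝ) : EucN 2 :=
  if |t| < Real.pi then pt2 t ((1 + Real.cos t) / (n + 1)) else pt2 t 0

/-!
The Poincaré constant at infinity is bounded above by products `f(x/s) g(y)` supported far out in
the half-strip. For the lower bound, the `n`-th block lies within vertical distance
`(1 + 1 / (n + 1)) / 2` of a graph, because the curve it surrounds is a `1 / (n + 1)`-Lipschitz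
graph; so far from the origin every vertical section of the chain has length at most `ℓ`, for any
given `ℓ > 1`, and the one-dimensional Poincaré inequality on sections gives `(π_p)^p / ℓ^p`.

For the minmax values, each block carries a test function with Rayleigh quotient below `(π_p)^p`.
Those of `k` blocks have disjoint supports, so suitably normalized they map the `ℓ¹` unit sphere of
`ℝ^k` by an odd continuous map onto a compact symmetric set of competitors on which the Rayleigh
quotient stays below the largest of the `k` quotients. The sphere has genus at least `k` by the
Borsuk–Ulam theorem. That theorem is proved with mod-2 cochains: the hemispheres are built one
dimension at a time by coning off to a new coordinate vector in small steps, and the cup product of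
the coboundaries of antipodally odd labels evaluates to `1` on each of them, so some arbitrarily
small simplex carries both signs of every coordinate.
-/

section Cochains

variable {X : Type*}

/-- The (augmented) simplicial coboundary mod 2: the value of `coboundary φ` on the simplex `l` is
the sum of `φ` over the faces of `l`. Simplices are lists of vertices, cochains are functions
`List X → ZMod 2`, and chains are multisets of simplices, so that `(c.map φ).sum` is the pairing of
the cochain `φ` with the chain `c`. -/
def coboundary : (List X → ZMod 2) → List X → ZMod 2
  | _, [] => 0
  | φ, x :: l => φ l + coboundary (fun m => φ (x :: m)) l

/-- A mod-2 cycle, expressed through the cochains: every coboundary pairs to zero with it. -/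
def IsCycle (c : Multiset (List X)) : Prop :=
  ∀ φ : List X → ZMod 2, (c.map (coboundary φ)).sum = 0

/-- The triangulated homotopy from `l.map g` to `l.map g'`. -/
def prism (g g' : X → X) : List X → Multiset (List X)
  | [] => 0
  | x :: l => (g x :: g' x :: l.map g') ::ₘ (prism g g' l).map (List.cons (g x))

/-- The chain swept out by the simplices of `c` along the maps `g 0, g 1, …, g N`. -/
def sweep (g : ℕ → X → X) (c : Multiset (List X)) (N : ℕ) : Multiset (List X) :=
  ∑ i ∈ Finset.range N, c.bind (prism (g i) (g (i + 1)))

lemma coboundary_add (φ ψ : List X → ZMod 2) (l : List X) :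
    coboundary (fun m => φ m + ψ m) l = coboundary φ l + coboundary ψ l := by
  induction l generalizing φ ψ with
  | nil => simp only [coboundary, add_zero]
  | cons x l ih => simp only [coboundary, ih]; ring

lemma coboundary_const_mul (a : ZMod 2) (φ : List X → ZMod 2) (l : List X) :
    coboundary (fun m => a * φ m) l = a * coboundary φ l := by
  induction l generalizing φ with
  | nil => simp only [coboundary, mul_zero]
  | cons x l ih => simp only [coboundary, ih, mul_add]

lemma coboundary_comp_map (g : X → X) (φ : List X → ZMod 2) (l : List X) :
    coboundary (fun m => φ (m.map g)) l = coboundary φ (l.map g) := by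
  induction l generalizing φ with
  | nil => rfl
  | cons x l ih => simp only [coboundary, List.map_cons, ih fun m => φ (g x :: m)]

lemma coboundary_congr {φ ψ : List X → ZMod 2} {l : List X}
    (h : ∀ m : List X, m.length + 1 = l.length → φ m = ψ m) : coboundary φ l = coboundary ψ l := by
  induction l generalizing φ ψ with
  | nil => rfl
  | cons x l ih =>
    rw [coboundary, coboundary, h l rfl, ih fun m hm => h (x :: m) (by simpa using hm)]

lemma sum_coboundary_prism (g g' : X → X) (φ : List X → ZMod 2) (l : List X) :
    ((prism g g' l).map (coboundary φ)).sum +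
        coboundary (fun m => ((prism g g' m).map φ).sum) l =
      φ (l.map g) + φ (l.map g') := by
  induction l generalizing φ with
  | nil => simp [coboundary, prism, CharTwo.add_self_eq_zero]
  | cons x l ih =>
    have hcone := coboundary_comp_map g' (fun m => φ (g x :: g' x :: m)) l
    have hface := ih fun m => φ (g x :: m)
    simp only [prism, Multiset.map_cons, Multiset.sum_cons, Multiset.map_map, Function.comp_def,
      coboundary, Multiset.sum_map_add, coboundary_add, List.map_cons] at hcone hface ⊢
    grind

lemma IsCycle.sum_coboundary_bind_prism {c : Multiset (List X)} (hc : IsCycle c) (g g' : X → X)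
    (φ : List X → ZMod 2) :
    ((c.bind (prism g g')).map (coboundary φ)).sum =
      (c.map fun l => φ (l.map g)).sum + (c.map fun l => φ (l.map g')).sum := by
  have hprism := hc fun m => ((prism g g' m).map φ).sum
  rw [← Multiset.sum_map_add, ← Multiset.map_congr rfl fun l _ => sum_coboundary_prism g g' φ l,
    Multiset.sum_map_add, hprism, add_zero, Multiset.map_bind, Multiset.sum_bind]

lemma IsCycle.sum_coboundary_sweep {c : Multiset (List X)} (hc : IsCycle c) (g : ℕ → X → X)
    (N : ℕ) (φ : List X → ZMod 2) :
    ((sweep g c N).map (coboundary φ)).sum =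
      (c.map fun l => φ (l.map (g 0))).sum + (c.map fun l => φ (l.map (g N))).sum := by
  induction N with
  | zero => simp [sweep, CharTwo.add_self_eq_zero]
  | succ N ih =>
    rw [sweep, Finset.sum_range_succ, Multiset.map_add, Multiset.sum_add,
      hc.sum_coboundary_bind_prism, ← sweep, ih]
    grind

lemma IsCycle.sum_coboundary_sweep_add_map {T : X → X} {c : Multiset (List X)}
    (hc : IsCycle (c + c.map (List.map T))) {g : ℕ → X → X} {N : ℕ} (h0 : g 0 = id)
    (hN : ∀ x, g N (T x) = g N x) (φ : List X → ZMod 2) :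
    ((sweep g (c + c.map (List.map T)) N).map (coboundary φ)).sum =
      (c.map φ).sum + (c.map fun l => φ (l.map T)).sum := by
  rw [hc.sum_coboundary_sweep]
  simp only [h0, List.map_id, Multiset.map_add, Multiset.sum_add, Multiset.map_map,
    Function.comp_def, List.map_map, hN, CharTwo.add_self_eq_zero, add_zero]

lemma length_of_mem_prism {g g' : X → X} {l m : List X} (hm : m ∈ prism g g' l) :
    m.length = l.length + 1 := by
  induction l generalizing m with
  | nil => simp [prism] at hm
  | cons x l ih =>
    rcases Multiset.mem_cons.1 hm with rfl | hm
    · simp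
    · obtain ⟨t, ht, rfl⟩ := Multiset.mem_map.1 hm
      simp [ih ht]

lemma exists_of_mem_of_mem_prism {g g' : X → X} {l m : List X} (hm : m ∈ prism g g' l) {x : X}
    (hx : x ∈ m) : ∃ y ∈ l, x = g y ∨ x = g' y := by
  induction l generalizing m with
  | nil => simp [prism] at hm
  | cons a l ih =>
    rcases Multiset.mem_cons.1 hm with rfl | hm
    · rcases List.mem_cons.1 hx with rfl | hx
      · exact ⟨a, by simp⟩
      · obtain ⟨y, hy, rfl⟩ := List.mem_map.1 (show x ∈ (a :: l).map g' from hx)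
        exact ⟨y, hy, .inr rfl⟩
    · obtain ⟨t, ht, rfl⟩ := Multiset.mem_map.1 hm
      rcases List.mem_cons.1 hx with rfl | hx
      · exact ⟨a, by simp⟩
      · obtain ⟨y, hy, h⟩ := ih ht hx
        exact ⟨y, by simp [hy], h⟩

lemma exists_of_mem_sweep {g : ℕ → X → X} {c : Multiset (List X)} {N : ℕ} {m : List X}
    (hm : m ∈ sweep g c N) : ∃ i < N, ∃ l ∈ c, m ∈ prism (g i) (g (i + 1)) l := by
  simpa [sweep, Multiset.mem_sum] using hm

lemma isCycle_add_map {T : X → X} (hT : Function.Involutive T) {c z : Multiset (List X)}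
    (h : ∀ φ, (c.map (coboundary φ)).sum = (z.map φ).sum + (z.map fun l => φ (l.map T)).sum) :
    IsCycle (c + c.map (List.map T)) := by
  intro φ
  have hreflect := h fun l => φ (l.map T)
  simp only [List.map_map, hT.comp_self, List.map_id, coboundary_comp_map] at hreflect
  rw [Multiset.map_add, Multiset.sum_add, Multiset.map_map, h φ]
  simp only [Function.comp_def, hreflect]
  grind

end Cochains

section Labels

variable {X : Type*} (s : ℕ → X → ZMod 2)

/-- The cup product of the coboundaries of the labels `s (d - 1), …, s 1, s 0`, evaluated on
`d`-simplices. -/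
def labelProduct : List X → ZMod 2
  | [] => 0
  | [_] => 1
  | x :: y :: l => (s l.length x + s l.length y) * labelProduct (y :: l)

/-- A primitive of `labelProduct`, obtained by dropping one coboundary: on `d`-simplices it is the
cup product of `s d` with the coboundaries of `s (d - 1), …, s 0`. -/
def labelPrimitive : List X → ZMod 2
  | [] => 0
  | x :: l => s l.length x * labelProduct s (x :: l)

lemma labelProduct_cons_cons (x y : X) (l : List X) :
    labelProduct s (x :: y :: l) =
      s l.length x * labelProduct s (y :: l) + labelPrimitive s (y :: l) := by
  rw [labelProduct, labelPrimitive, add_mul]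

lemma coboundary_labelPrimitive_of_coboundary_labelProduct {x y : X} {l : List X}
    (h : coboundary (labelProduct s) (x :: y :: l) = 0) :
    coboundary (labelPrimitive s) (x :: y :: l) = labelProduct s (x :: y :: l) := by
  have hcone : coboundary (fun m => labelPrimitive s (x :: m)) (y :: l) =
      s l.length x * coboundary (fun m => labelProduct s (x :: m)) (y :: l) := by
    rw [← coboundary_const_mul]
    refine coboundary_congr fun m hm => ?_
    rw [labelPrimitive, show m.length = l.length by simpa using hm]
  rw [coboundary] at h
  rw [coboundary, hcone, labelProduct_cons_cons, ← CharTwo.add_eq_zero.1 h, add_comm]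

lemma coboundary_labelProduct (l : List X) : coboundary (labelProduct s) l = 0 := by
  match l with
  | [] => rfl
  | [_] => simp [coboundary, labelProduct]
  | [_, _] => simp [coboundary, labelProduct, CharTwo.add_self_eq_zero]
  | x :: y :: z :: l =>
    have ih := coboundary_labelProduct (y :: z :: l)
    have hcone : coboundary (fun m => labelProduct s (x :: m)) (y :: z :: l) =
        coboundary (fun m => s l.length x * labelProduct s m + labelPrimitive s m) (y :: z :: l) :=
      coboundary_congr fun m hm => by
        match m, hm with
        | u :: m, hm =>
          rw [labelProduct_cons_cons, show m.length = l.length by simpa using hm]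
    rw [coboundary, hcone, coboundary_add, coboundary_const_mul, ih,
      coboundary_labelPrimitive_of_coboundary_labelProduct s ih, mul_zero, zero_add,
      CharTwo.add_self_eq_zero]

lemma coboundary_labelPrimitive {l : List X} (hl : 2 ≤ l.length) :
    coboundary (labelPrimitive s) l = labelProduct s l := by
  match l, hl with
  | x :: y :: l, _ =>
    exact coboundary_labelPrimitive_of_coboundary_labelProduct s (coboundary_labelProduct s _)

variable {s}

lemma labelProduct_map {T : X → X} {l : List X} (h : ∀ i, ∀ x ∈ l, s i (T x) = s i x + 1) :
    labelProduct s (l.map T) = labelProduct s l := by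
  match l with
  | [] => rfl
  | [_] => rfl
  | x :: y :: l =>
    have ih := labelProduct_map fun i z (hz : z ∈ y :: l) => h i z (List.mem_cons_of_mem _ hz)
    simp only [List.map_cons] at ih
    simp only [List.map_cons, labelProduct, List.length_map, ih, h _ x List.mem_cons_self,
      h _ y (List.mem_cons_of_mem _ List.mem_cons_self)]
    grind

lemma labelPrimitive_add_labelPrimitive_map {T : X → X} {l : List X}
    (h : ∀ i, ∀ x ∈ l, s i (T x) = s i x + 1) :
    labelPrimitive s l + labelPrimitive s (l.map T) = labelProduct s l := by
  match l with
  | [] => rfl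
  | x :: l =>
    have hproduct := labelProduct_map h
    simp only [List.map_cons] at hproduct
    simp only [List.map_cons, labelPrimitive, hproduct, List.length_map, h _ x List.mem_cons_self]
    grind

lemma exists_ne_of_labelProduct_ne_zero {l : List X} (h : labelProduct s l ≠ 0) {i : ℕ}
    (hi : i + 1 < l.length) : ∃ x ∈ l, ∃ y ∈ l, s i x ≠ s i y := by
  match l with
  | [] => simp at hi
  | [_] => simp at hi
  | x :: y :: l =>
    rw [labelProduct] at h
    rcases (Nat.lt_succ_iff.1 (by simpa using hi) : i ≤ l.length).eq_or_lt with rfl | hil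
    · refine ⟨x, by simp, y, by simp, fun hxy => left_ne_zero_of_mul h ?_⟩
      rw [hxy, CharTwo.add_self_eq_zero]
    · obtain ⟨a, ha, b, hb, hab⟩ :=
        exists_ne_of_labelProduct_ne_zero (right_ne_zero_of_mul h) (by simpa using hil)
      exact ⟨a, List.mem_cons_of_mem _ ha, b, List.mem_cons_of_mem _ hb, hab⟩

end Labels

section FineSimplices

variable {X : Type*} [PseudoMetricSpace X]

/-- A simplex on `d` vertices, all lying in `S` and at mutual distances less than `δ`. -/
structure IsFineSimplex (S : Set X) (d : ℕ) (δ : ℝ) (l : List X) : Prop where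
  length_eq : l.length = d
  mem : ∀ x ∈ l, x ∈ S
  dist_lt : ∀ x ∈ l, ∀ y ∈ l, dist x y < δ

lemma IsFineSimplex.map {S : Set X} {d : ℕ} {δ : ℝ} {l : List X} (h : IsFineSimplex S d δ l)
    {T : X → X} (hT : Isometry T) (hS : MapsTo T S S) : IsFineSimplex S d δ (l.map T) where
  length_eq := by simpa using h.length_eq
  mem := by simpa using fun x hx => hS (h.mem x hx)
  dist_lt := by simpa [hT.dist_eq] using h.dist_lt

lemma IsFineSimplex.of_mem_prism {S S' : Set X} {d : ℕ} {δ η : ℝ} {l m : List X} {g g' : X → X}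
    (h : IsFineSimplex S d δ l) (hm : m ∈ prism g g' l) (hg : MapsTo g S S')
    (hg' : MapsTo g' S S') (hgdist : ∀ x y, dist (g x) (g y) ≤ dist x y)
    (hgdist' : ∀ x y, dist (g' x) (g' y) ≤ dist x y) (hgg' : ∀ x ∈ S, dist (g x) (g' x) ≤ η)
    (hη : 0 ≤ η) : IsFineSimplex S' (d + 1) (δ + η) m where
  length_eq := by rw [length_of_mem_prism hm, h.length_eq]
  mem x hx := by
    obtain ⟨y, hy, rfl | rfl⟩ := exists_of_mem_of_mem_prism hm hx
    exacts [hg (h.mem y hy), hg' (h.mem y hy)]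
  dist_lt x hx y hy := by
    obtain ⟨a, ha, hxa⟩ := exists_of_mem_of_mem_prism hm hx
    obtain ⟨b, hb, hyb⟩ := exists_of_mem_of_mem_prism hm hy
    have hab := h.dist_lt a ha b hb
    have haa := hgg' a (h.mem a ha)
    have hbb := hgg' b (h.mem b hb)
    rcases hxa with rfl | rfl <;> rcases hyb with rfl | rfl
    · linarith [hgdist a b]
    · linarith [hgdist a b, dist_triangle (g a) (g b) (g' b)]
    · linarith [hgdist a b, dist_triangle_left (g' a) (g b) (g a)]
    · linarith [hgdist' a b]

end FineSimplices

section L1Sphere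

/-- The unit sphere of the `ℓ¹` norm. -/
def l1Sphere (n : ℕ) : Set (Fin n → ℝ) := {a | ∑ i, |a i| = 1}

/-- The unit sphere of the `ℓ¹` norm on the span of the first `m` coordinate vectors. -/
def l1Subsphere (n m : ℕ) : Set (Fin n → ℝ) := {a ∈ l1Sphere n | ∀ i : Fin n, m ≤ i → a i = 0}

variable {n m : ℕ}

lemma norm_le_one_of_mem_l1Sphere {a : Fin n → ℝ} (ha : a ∈ l1Sphere n) : ‖a‖ ≤ 1 := by
  rw [pi_norm_le_iff_of_nonneg zero_le_one, ← show ∑ i, |a i| = 1 from ha]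
  exact fun i => Finset.single_le_sum (f := fun j => |a j|) (fun _ _ => abs_nonneg _)
    (Finset.mem_univ i)

lemma isCompact_l1Sphere (n : ℕ) : IsCompact (l1Sphere n) := by
  refine isCompact_of_isClosed_isBounded (isClosed_eq (by fun_prop) continuous_const) ?_
  exact isBounded_closedBall.subset fun a ha =>
    mem_closedBall_zero_iff.2 (norm_le_one_of_mem_l1Sphere ha)

lemma ne_zero_of_mem_l1Sphere {a : Fin n → ℝ} (ha : a ∈ l1Sphere n) : a ≠ 0 := by
  rintro rfl
  simp [l1Sphere] at ha

lemma neg_mem_l1Sphere {a : Fin n → ℝ} (ha : a ∈ l1Sphere n) : -a ∈ l1Sphere n := by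
  simpa [l1Sphere] using ha

lemma neg_mem_l1Subsphere {a : Fin n → ℝ} (ha : a ∈ l1Subsphere n m) : -a ∈ l1Subsphere n m :=
  ⟨neg_mem_l1Sphere ha.1, fun i hi => by simp [ha.2 i hi]⟩

lemma single_mem_l1Subsphere (hm : m < n) :
    Pi.single (⟨m, hm⟩ : Fin n) (1 : ℝ) ∈ l1Subsphere n (m + 1) := by
  refine ⟨?_, fun i hi => Pi.single_eq_of_ne (Fin.ne_of_gt hi) _⟩
  change ∑ i, |Pi.single (⟨m, hm⟩ : Fin n) (1 : ℝ) i| = 1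
  simp [Pi.single_apply, apply_ite abs]

lemma lineMap_single_mem_l1Subsphere (hm : m < n) {a : Fin n → ℝ} (ha : a ∈ l1Subsphere n m)
    {t : ℝ} (ht : t ∈ Icc (0 : ℝ) 1) :
    AffineMap.lineMap a (Pi.single (⟨m, hm⟩ : Fin n) (1 : ℝ)) t ∈ l1Subsphere n (m + 1) := by
  have he := single_mem_l1Subsphere hm
  set e : Fin n → ℝ := Pi.single ⟨m, hm⟩ 1
  have hsplit (i : Fin n) : |AffineMap.lineMap a e t i| = (1 - t) * |a i| + t * |e i| := by
    rw [AffineMap.lineMap_apply_module, Pi.add_apply, Pi.smul_apply, Pi.smul_apply, smul_eq_mul,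
      smul_eq_mul]
    rcases lt_or_ge (i : ℕ) m with hi | hi
    · have hei : e i = 0 := Pi.single_eq_of_ne (Fin.ne_of_lt hi) _
      simp [hei, abs_mul, abs_of_nonneg (sub_nonneg.2 ht.2)]
    · simp [ha.2 i hi, abs_mul, abs_of_nonneg ht.1]
  constructor
  · change ∑ i, |AffineMap.lineMap a e t i| = 1
    simp only [hsplit, Finset.sum_add_distrib, ← Finset.mul_sum, show ∑ i, |a i| = 1 from ha.1,
      show ∑ i, |e i| = 1 from he.1]
    ring
  · intro i hi
    rw [AffineMap.lineMap_apply_module, Pi.add_apply, Pi.smul_apply, Pi.smul_apply,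
      ha.2 i (by omega), he.2 i hi, smul_zero, smul_zero, add_zero]

/-- The `i`-th of `N` equal steps along the segments towards the `m`-th coordinate vector. -/
def coneStep (hm : m < n) (N i : ℕ) (a : Fin n → ℝ) : Fin n → ℝ :=
  AffineMap.lineMap a (Pi.single (⟨m, hm⟩ : Fin n) (1 : ℝ)) ((i : ℝ) / N)

lemma coneStep_zero (hm : m < n) (N : ℕ) : coneStep hm N 0 = id := by
  funext a
  simp [coneStep]

lemma coneStep_self (hm : m < n) {N : ℕ} (hN : 0 < N) (a : Fin n → ℝ) :
    coneStep hm N N a = Pi.single ⟨m, hm⟩ 1 := by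
  simp [coneStep, hN.ne']

lemma coneStep_mem_l1Subsphere (hm : m < n) {N i : ℕ} (hi : i ≤ N) :
    MapsTo (coneStep hm N i) (l1Subsphere n m) (l1Subsphere n (m + 1)) := fun _ ha =>
  lineMap_single_mem_l1Subsphere hm ha
    ⟨by positivity, div_le_one_of_le₀ (by exact_mod_cast hi) (by positivity)⟩

lemma dist_coneStep_le (hm : m < n) {N i : ℕ} (hi : i ≤ N) (a b : Fin n → ℝ) :
    dist (coneStep hm N i a) (coneStep hm N i b) ≤ dist a b := by
  have hle : (i : ℝ) / N ≤ 1 := div_le_one_of_le₀ (by exact_mod_cast hi) (by positivity)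
  have h0 : 0 ≤ (i : ℝ) / N := by positivity
  rw [coneStep, coneStep, AffineMap.lineMap_apply_module, AffineMap.lineMap_apply_module,
    dist_add_right, dist_smul₀, Real.norm_of_nonneg (sub_nonneg.2 hle)]
  exact mul_le_of_le_one_left dist_nonneg (by linarith)

lemma dist_coneStep_succ_le (hm : m < n) (N i : ℕ) {a : Fin n → ℝ} (ha : a ∈ l1Sphere n) :
    dist (coneStep hm N i a) (coneStep hm N (i + 1) a) ≤ 2 / N := by
  set e : Fin n → ℝ := Pi.single ⟨m, hm⟩ 1
  have hae : dist a e ≤ 2 := by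
    have ha1 := norm_le_one_of_mem_l1Sphere ha
    have he1 := norm_le_one_of_mem_l1Sphere (single_mem_l1Subsphere hm).1
    linarith [dist_le_norm_add_norm a e]
  have hstep : dist ((i : ℝ) / N) ((i + 1 : ℕ) / N) = 1 / N := by
    rw [Real.dist_eq, ← sub_div, abs_div, Nat.abs_cast]
    simp
  rw [coneStep, coneStep, dist_lineMap_lineMap, hstep, div_mul_eq_mul_div, one_mul]
  gcongr

lemma isFineSimplex_of_mem_sweep_coneStep (hm : m < n) {c : Multiset (List (Fin n → ℝ))} {d N : ℕ}
    {δ : ℝ} (hc : ∀ l ∈ c, IsFineSimplex (l1Subsphere n m) d δ l) :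
    ∀ l ∈ sweep (coneStep hm N) c N,
      IsFineSimplex (l1Subsphere n (m + 1)) (d + 1) (δ + 2 / N) l := by
  intro l hl
  obtain ⟨i, hi, l', hl', hmem⟩ := exists_of_mem_sweep hl
  exact (hc l' hl').of_mem_prism hmem (coneStep_mem_l1Subsphere hm hi.le)
    (coneStep_mem_l1Subsphere hm hi) (dist_coneStep_le hm hi.le) (dist_coneStep_le hm hi)
    (fun a ha => dist_coneStep_succ_le hm N i ha.1) (by positivity)

/-- A fine triangulated `m`-dimensional hemisphere, encoded by what is needed of it: together with
its antipode it is a cycle, and it pairs to `1` with the product of the labels `s`. -/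
structure IsHemisphere (s : ℕ → (Fin n → ℝ) → ZMod 2) (m : ℕ) (δ : ℝ)
    (c : Multiset (List (Fin n → ℝ))) : Prop where
  isFineSimplex : ∀ l ∈ c, IsFineSimplex (l1Subsphere n (m + 1)) (m + 1) δ l
  isCycle : IsCycle (c + c.map (List.map Neg.neg))
  sum_labelProduct : (c.map (labelProduct s)).sum = 1

lemma isHemisphere_singleton (s : ℕ → (Fin n → ℝ) → ZMod 2) (hn : 0 < n) {δ : ℝ} (hδ : 0 < δ) :
    IsHemisphere s 0 δ {[Pi.single (⟨0, hn⟩ : Fin n) (1 : ℝ)]} where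
  isFineSimplex l hl := by
    obtain rfl := Multiset.mem_singleton.1 hl
    exact ⟨rfl, by simpa using single_mem_l1Subsphere hn, by simpa using hδ⟩
  isCycle φ := by simp [coboundary, CharTwo.add_self_eq_zero]
  sum_labelProduct := by simp [labelProduct]

lemma IsHemisphere.sweep {s : ℕ → (Fin n → ℝ) → ZMod 2}
    (hs : ∀ i, ∀ x ∈ l1Sphere n, s i (-x) = s i x + 1) {m : ℕ} (hm : m + 1 < n) {δ : ℝ}
    {c : Multiset (List (Fin n → ℝ))} (hc : IsHemisphere s m δ c) {N : ℕ} (hN : 0 < N) :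
    IsHemisphere s (m + 1) (δ + 2 / N)
      (sweep (coneStep hm N) (c + c.map (List.map Neg.neg)) N) := by
  have hfine : ∀ l ∈ c + c.map (List.map Neg.neg),
      IsFineSimplex (l1Subsphere n (m + 1)) (m + 1) δ l := by
    intro l hl
    rcases Multiset.mem_add.1 hl with hl | hl
    · exact hc.isFineSimplex l hl
    · obtain ⟨l', hl', rfl⟩ := Multiset.mem_map.1 hl
      exact (hc.isFineSimplex l' hl').map isometry_neg fun _ => neg_mem_l1Subsphere
  have hsweep := isFineSimplex_of_mem_sweep_coneStep hm (N := N) hfine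
  have hboundary := hc.isCycle.sum_coboundary_sweep_add_map (coneStep_zero hm N)
    (fun a => by rw [coneStep_self hm hN, coneStep_self hm hN])
  refine ⟨hsweep, isCycle_add_map neg_involutive hboundary, ?_⟩
  have hprimitive := Multiset.map_congr rfl fun l hl =>
    coboundary_labelPrimitive s (l := l) (by rw [(hsweep l hl).length_eq]; omega)
  rw [← hprimitive, hboundary, ← Multiset.sum_map_add, ← hc.sum_labelProduct]
  refine congrArg _ (Multiset.map_congr rfl fun l hl => ?_)
  exact labelPrimitive_add_labelPrimitive_map fun i x hx =>
    hs i x ((hc.isFineSimplex l hl).mem x hx).1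

lemma exists_isHemisphere {s : ℕ → (Fin n → ℝ) → ZMod 2}
    (hs : ∀ i, ∀ x ∈ l1Sphere n, s i (-x) = s i x + 1) (m : ℕ) (hm : m < n) {δ : ℝ} (hδ : 0 < δ) :
    ∃ c, IsHemisphere s m δ c := by
  induction m generalizing δ with
  | zero => exact ⟨_, isHemisphere_singleton s hm hδ⟩
  | succ m ih =>
    obtain ⟨c, hc⟩ := ih (by omega) (half_pos hδ)
    obtain ⟨N, hN⟩ := exists_nat_gt (4 / δ)
    have hN0 : (0 : ℝ) < N := (by positivity : (0 : ℝ) ≤ 4 / δ).trans_lt hN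
    have hmesh := hc.sweep hs hm (Nat.cast_pos.1 hN0)
    refine ⟨_, fun l hl => ?_, hmesh.isCycle, hmesh.sum_labelProduct⟩
    obtain ⟨hlen, hmem, hdist⟩ := hmesh.isFineSimplex l hl
    refine ⟨hlen, hmem, fun x hx y hy => (hdist x hx y hy).trans_le ?_⟩
    have hN2 : 2 / (N : ℝ) ≤ δ / 2 := by
      rw [div_lt_iff₀ hδ] at hN
      rw [div_le_div_iff₀ hN0 two_pos]
      linarith
    linarith

/-- The sign of `t`, with ties broken by the lexicographic sign of `x`, so that it is odd. -/
def tieBreakingSign (t : ℝ) (x : Fin n → ℝ) : ZMod 2 :=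
  open Classical in if 0 < toLex (t, toLex x) then 1 else 0

lemma tieBreakingSign_neg_neg (t : ℝ) {x : Fin n → ℝ} (hx : x ≠ 0) :
    tieBreakingSign (-t) (-x) = tieBreakingSign t x + 1 := by
  have hne : toLex (t, toLex x) ≠ 0 := fun h => hx (congrArg Prod.snd h)
  have hneg : toLex (-t, toLex (-x)) = -toLex (t, toLex x) := rfl
  rw [tieBreakingSign, tieBreakingSign, hneg]
  rcases lt_or_gt_of_ne hne with h | h
  · rw [if_pos (neg_pos.2 h), if_neg h.not_gt, zero_add]
  · rw [if_neg (by simpa using h.le), if_pos h, CharTwo.add_self_eq_zero]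

lemma tieBreakingSign_of_pos {t : ℝ} (ht : 0 < t) (x : Fin n → ℝ) : tieBreakingSign t x = 1 :=
  if_pos (Prod.Lex.toLex_lt_toLex.2 (.inl ht))

lemma tieBreakingSign_of_neg {t : ℝ} (ht : t < 0) (x : Fin n → ℝ) : tieBreakingSign t x = 0 :=
  if_neg (Prod.Lex.toLex_lt_toLex.2 (.inl ht) : toLex (t, toLex x) < 0).not_gt

lemma abs_le_abs_sub_of_tieBreakingSign_ne {t u : ℝ} {x y : Fin n → ℝ}
    (h : tieBreakingSign t x ≠ tieBreakingSign u y) : |t| ≤ |t - u| := by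
  rcases lt_trichotomy t 0 with ht | rfl | ht
  · have hu : 0 ≤ u := not_lt.1 fun hu =>
      h ((tieBreakingSign_of_neg ht x).trans (tieBreakingSign_of_neg hu y).symm)
    rw [abs_of_neg ht, abs_of_neg (by linarith)]
    linarith
  · simp
  · have hu : u ≤ 0 := not_lt.1 fun hu =>
      h ((tieBreakingSign_of_pos ht x).trans (tieBreakingSign_of_pos hu y).symm)
    rw [abs_of_pos ht, abs_of_pos (by linarith)]
    linarith

lemma exists_isFineSimplex_abs_le_abs_sub {j : ℕ} (hjn : j < n) {F : (Fin n → ℝ) → Fin j → ℝ}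
    (hF : ∀ x ∈ l1Sphere n, F (-x) = -F x) {δ : ℝ} (hδ : 0 < δ) :
    ∃ l, IsFineSimplex (l1Sphere n) n δ l ∧
      ∀ i, ∃ x ∈ l, ∃ y ∈ l, |F x i| ≤ |F x i - F y i| := by
  obtain ⟨n, rfl⟩ := Nat.exists_eq_succ_of_ne_zero (Nat.ne_zero_of_lt hjn)
  let f (i : ℕ) (x : Fin (n + 1) → ℝ) : ℝ := if h : i < j then F x ⟨i, h⟩ else 0
  have hf (i : ℕ) (x) (hx : x ∈ l1Sphere (n + 1)) : f i (-x) = -f i x := by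
    by_cases h : i < j <;> simp [f, h, hF x hx]
  obtain ⟨c, hc⟩ := exists_isHemisphere (s := fun i x => tieBreakingSign (f i x) x)
    (fun i x hx => by
      rw [hf i x hx, tieBreakingSign_neg_neg _ (ne_zero_of_mem_l1Sphere hx)])
    n n.lt_succ_self hδ
  obtain ⟨l, hl, hne⟩ : ∃ l ∈ c, labelProduct (fun i x => tieBreakingSign (f i x) x) l ≠ 0 := by
    by_contra! h
    have hsum := hc.sum_labelProduct
    rw [Multiset.map_congr rfl h, Multiset.sum_map_zero] at hsum
    exact zero_ne_one hsum
  obtain ⟨hlen, hmem, hdist⟩ := hc.isFineSimplex l hl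
  refine ⟨l, ⟨hlen, fun x hx => (hmem x hx).1, hdist⟩, fun i => ?_⟩
  obtain ⟨x, hx, y, hy, hxy⟩ := exists_ne_of_labelProduct_ne_zero hne (i := i) (by omega)
  exact ⟨x, hx, y, hy, by simpa [f] using abs_le_abs_sub_of_tieBreakingSign_ne hxy⟩

theorem borsuk_ulam_l1Sphere {j : ℕ} (hjn : j < n) {F : (Fin n → ℝ) → Fin j → ℝ}
    (hFc : ContinuousOn F (l1Sphere n)) (hF : ∀ x ∈ l1Sphere n, F (-x) = -F x) :
    ∃ x ∈ l1Sphere n, F x = 0 := by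
  have hne : (l1Sphere n).Nonempty := ⟨_, (single_mem_l1Subsphere (Nat.zero_lt_of_lt hjn)).1⟩
  obtain ⟨a, ha, hmin⟩ := (isCompact_l1Sphere n).exists_isMinOn hne hFc.norm
  refine ⟨a, ha, norm_eq_zero.1 (le_antisymm (not_lt.1 fun hpos => ?_) (norm_nonneg _))⟩
  obtain ⟨δ, hδ, hclose⟩ := Metric.uniformContinuousOn_iff.1
    ((isCompact_l1Sphere n).uniformContinuousOn_of_continuous hFc) _ (half_pos hpos)
  obtain ⟨l, hl, hlabel⟩ := exists_isFineSimplex_abs_le_abs_sub hjn hF hδ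
  obtain ⟨z, hz⟩ : ∃ z, z ∈ l := List.exists_mem_of_length_pos (by rw [hl.length_eq]; omega)
  have hosc (x) (hx : x ∈ l) (y) (hy : y ∈ l) (i : Fin j) : |F x i - F y i| < ‖F a‖ / 2 :=
    (dist_le_pi_dist (F x) (F y) i).trans_lt
      (hclose x (hl.mem x hx) y (hl.mem y hy) (hl.dist_lt x hx y hy))
  refine (hmin (hl.mem z hz)).not_gt ((pi_norm_lt_iff hpos).2 fun i => ?_)
  obtain ⟨x, hx, y, hy, hxy⟩ := hlabel i
  rw [Real.norm_eq_abs]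
  linarith [hosc z hz x hx i, hosc x hx y hy i, abs_sub_abs_le_abs_sub (F z i) (F x i)]

lemma genusGE_l1Sphere (k : ℕ) : genusGE (l1Sphere k) k := by
  rintro j ⟨f, hfc, hf1, hf⟩
  by_contra! hjk
  obtain ⟨x, hx, hx0⟩ := borsuk_ulam_l1Sphere hjk (F := fun a => (f a).ofLp)
    ((PiLp.continuous_ofLp 2 _).comp_continuousOn hfc) fun a ha => by rw [hf a ha]; rfl
  have hfx : f x = 0 := PiLp.ext fun i => congrFun hx0 i
  simpa [hfx] using hf1 x hx

end L1Sphere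

section Genus

variable {Y Z : Type*} [NormedAddCommGroup Y] [NormedAddCommGroup Z]

lemma genusGE.image {A : Set Y} {k : ℕ} (hA : genusGE A k) {F : Y → Z} (hFc : ContinuousOn F A)
    (hF : ∀ x ∈ A, F (-x) = -F x) : genusGE (F '' A) k := by
  rintro j ⟨f, hfc, hf1, hf⟩
  refine hA j ⟨f ∘ F, hfc.comp hFc (mapsTo_image F A), fun x hx => hf1 _ (mem_image_of_mem F hx),
    fun x hx => ?_⟩
  rw [Function.comp_apply, hF x hx, hf _ (mem_image_of_mem F hx), Function.comp_apply]

end Genus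

section Gradient

variable {E : Type*} [NormedAddCommGroup E] [InnerProductSpace ℝ E] [CompleteSpace E]

lemma norm_gradient_eq_norm_fderiv (ψ : E → ℝ) (x : E) : ‖gradient ψ x‖ = ‖fderiv ℝ ψ x‖ := by
  simp [gradient]

lemma continuous_gradient_of_contDiff {ψ : E → ℝ} {n : WithTop ℕ∞} (hψ : ContDiff ℝ n ψ)
    (hn : n ≠ 0) : Continuous (gradient ψ) :=
  (LinearIsometryEquiv.continuous _).comp (hψ.continuous_fderiv hn)

lemma hasCompactSupport_gradient {ψ : E → ℝ} (hψ : HasCompactSupport ψ) :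
    HasCompactSupport (gradient ψ) :=
  (hψ.fderiv ℝ).comp_left (g := (InnerProductSpace.toDual ℝ E).symm) (map_zero _)

end Gradient

section PowerIntegrals

variable {X E : Type*} [TopologicalSpace X] [NormedAddCommGroup E] {p : ℝ} {f : X → E}

lemma continuous_norm_rpow (hf : Continuous f) (hp : 0 ≤ p) : Continuous fun x => ‖f x‖ ^ p :=
  hf.norm.rpow_const fun _ => .inr hp

lemma hasCompactSupport_norm_rpow (hf : HasCompactSupport f) (hp : 0 < p) :
    HasCompactSupport fun x => ‖f x‖ ^ p :=
  hf.comp_left (g := fun y => ‖y‖ ^ p) (by simp [hp.ne'])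

variable [MeasurableSpace X] [BorelSpace X] {μ : Measure X}

lemma integrable_norm_rpow [IsFiniteMeasureOnCompacts μ] (hf : Continuous f)
    (hfc : HasCompactSupport f) (hp : 0 < p) : Integrable (fun x => ‖f x‖ ^ p) μ :=
  (continuous_norm_rpow hf hp.le).integrable_of_hasCompactSupport
    (hasCompactSupport_norm_rpow hfc hp)

lemma integral_norm_rpow_pos [IsFiniteMeasureOnCompacts μ] [μ.IsOpenPosMeasure]
    (hf : Continuous f) (hfc : HasCompactSupport f) (hp : 0 < p) {x : X} (hx : f x ≠ 0) :
    0 < ∫ x, ‖f x‖ ^ p ∂μ :=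
  (continuous_norm_rpow hf hp.le).integral_pos_of_hasCompactSupport_nonneg_nonzero
    (hasCompactSupport_norm_rpow hfc hp) (fun _ => by positivity)
    (Real.rpow_pos_of_pos (norm_pos_iff.2 hx) p).ne'

lemma integral_norm_rpow_eq_norm_rpow {X : Type*} [MeasurableSpace X] {μ : Measure X}
    (hp : 0 < p) (f : Lp E (ENNReal.ofReal p) μ) : ∫ x, ‖f x‖ ^ p ∂μ = ‖f‖ ^ p := by
  have h := (Lp.memLp f).eLpNorm_eq_integral_rpow_norm (by simpa using hp) ENNReal.ofReal_ne_top
  rw [ENNReal.toReal_ofReal hp.le] at h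
  rw [Lp.norm_def, h, ENNReal.toReal_ofReal (by positivity),
    Real.rpow_inv_rpow (by positivity) hp.ne']

end PowerIntegrals

section TestPairs

variable {N : ℕ} {Ω : Set (EucN N)} {ψ χ : EucN N → ℝ}

lemma IsTestFun.add (hψ : IsTestFun Ω ψ) (hχ : IsTestFun Ω χ) : IsTestFun Ω (ψ + χ) :=
  ⟨hψ.1.add hχ.1, hψ.2.1.add hχ.2.1,
    (tsupport_add ψ χ).trans (union_subset hψ.2.2 hχ.2.2)⟩

lemma IsTestFun.const_smul (hψ : IsTestFun Ω ψ) (c : ℝ) : IsTestFun Ω (c • ψ) :=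
  ⟨hψ.1.const_smul c, hψ.2.1.smul_left (f := fun _ => c),
    (tsupport_smul_subset_right (fun _ => c) ψ).trans hψ.2.2⟩

lemma isTestFun_zero : IsTestFun Ω 0 :=
  ⟨contDiff_const, HasCompactSupport.zero, by simp [tsupport_zero]⟩

lemma IsTestFun.differentiable (hψ : IsTestFun Ω ψ) : Differentiable ℝ ψ :=
  hψ.1.differentiable (by simp)

lemma IsTestFun.continuous_fderiv (hψ : IsTestFun Ω ψ) : Continuous (fderiv ℝ ψ) :=
  hψ.1.continuous_fderiv (by simp)

/-- The linear space of the pairs formed by a test function on `Ω` and its gradient; `W10` is its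
closure. -/
def testPairs (q : ℝ≥0∞) (Ω : Set (EucN N)) : Submodule ℝ (SobPair N q) where
  carrier := {w | IsTestPair q Ω w}
  add_mem' := by
    rintro v w ⟨ψ, hψ, hv1, hv2⟩ ⟨χ, hχ, hw1, hw2⟩
    refine ⟨ψ + χ, hψ.add hχ, (Lp.coeFn_add _ _).trans (hv1.add hw1), ?_⟩
    filter_upwards [Lp.coeFn_add v.2 w.2, hv2, hw2] with x hx hvx hwx
    rw [Prod.snd_add, hx, Pi.add_apply, hvx, hwx, gradient, gradient, gradient,
      fderiv_add (hψ.differentiable x) (hχ.differentiable x), map_add]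
  zero_mem' := by
    refine ⟨0, isTestFun_zero, Lp.coeFn_zero _ _ _, ?_⟩
    filter_upwards [Lp.coeFn_zero (EucN N) q (volume : Measure (EucN N))] with x hx
    rw [Prod.snd_zero, hx, gradient, fderiv_zero, Pi.zero_apply, Pi.zero_apply, map_zero]
  smul_mem' := by
    rintro c w ⟨ψ, hψ, hw1, hw2⟩
    refine ⟨c • ψ, hψ.const_smul c, (Lp.coeFn_smul _ _).trans (hw1.const_smul c), ?_⟩
    filter_upwards [Lp.coeFn_smul c w.2, hw2] with x hx hwx
    rw [Prod.smul_snd, hx, Pi.smul_apply, hwx, gradient, gradient,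
      fderiv_const_smul (hψ.differentiable x), map_smul]

lemma IsTestFun.memLp (hψ : IsTestFun Ω ψ) (q : ℝ≥0∞) : MemLp ψ q :=
  hψ.1.continuous.memLp_of_hasCompactSupport hψ.2.1

lemma IsTestFun.memLp_gradient (hψ : IsTestFun Ω ψ) (q : ℝ≥0∞) : MemLp (gradient ψ) q :=
  (continuous_gradient_of_contDiff hψ.1 (by simp)).memLp_of_hasCompactSupport
    (hasCompactSupport_gradient hψ.2.1)

/-- The element of `L^q × L^q` given by a test function and its gradient. -/
def IsTestFun.toPair (hψ : IsTestFun Ω ψ) (q : ℝ≥0∞) : SobPair N q :=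
  ((hψ.memLp q).toLp ψ, (hψ.memLp_gradient q).toLp (gradient ψ))

lemma IsTestFun.coeFn_toPair_fst (hψ : IsTestFun Ω ψ) (q : ℝ≥0∞) :
    (hψ.toPair q).1 =ᵐ[volume] ψ := (hψ.memLp q).coeFn_toLp

lemma IsTestFun.coeFn_toPair_snd (hψ : IsTestFun Ω ψ) (q : ℝ≥0∞) :
    (hψ.toPair q).2 =ᵐ[volume] gradient ψ := (hψ.memLp_gradient q).coeFn_toLp

variable {p : ℝ}

lemma IsTestFun.toPair_mem_W10 (hψ : IsTestFun Ω ψ) (hp : 1 ≤ p) :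
    hψ.toPair (ENNReal.ofReal p) ∈ W10 N p hp Ω :=
  have := fact_one_le_ofReal hp
  subset_closure ⟨ψ, hψ, hψ.coeFn_toPair_fst _, hψ.coeFn_toPair_snd _⟩

lemma norm_fst_rpow_of_ae_eq (hp : 0 < p) {w : SobPair N (ENNReal.ofReal p)}
    (h : w.1 =ᵐ[volume] ψ) : ‖w.1‖ ^ p = ∫ x, |ψ x| ^ p := by
  rw [← integral_norm_rpow_eq_norm_rpow hp]
  exact integral_congr_ae (h.mono fun x hx => by simp only [hx, Real.norm_eq_abs])

lemma norm_snd_rpow_of_ae_eq (hp : 0 < p) {w : SobPair N (ENNReal.ofReal p)}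
    (h : w.2 =ᵐ[volume] gradient ψ) : ‖w.2‖ ^ p = ∫ x, ‖fderiv ℝ ψ x‖ ^ p := by
  rw [← integral_norm_rpow_eq_norm_rpow hp]
  exact integral_congr_ae (h.mono fun x hx => by simp only [hx, norm_gradient_eq_norm_fderiv])

lemma sum_smul_mem_W10 (hp : 1 ≤ p) {ι : Type*} [Fintype ι] {w : ι → SobPair N (ENNReal.ofReal p)}
    (hw : ∀ i, w i ∈ W10 N p hp Ω) (c : ι → ℝ) : ∑ i, c i • w i ∈ W10 N p hp Ω :=
  have := fact_one_le_ofReal hp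
  Submodule.sum_smul_mem (testPairs (ENNReal.ofReal p) Ω).topologicalClosure c fun i _ => hw i

lemma smul_mem_W10 (hp : 1 ≤ p) {w : SobPair N (ENNReal.ofReal p)} (hw : w ∈ W10 N p hp Ω)
    (c : ℝ) : c • w ∈ W10 N p hp Ω :=
  have := fact_one_le_ofReal hp
  Submodule.smul_mem (testPairs (ENNReal.ofReal p) Ω).topologicalClosure c hw

end TestPairs

section RayleighQuotients

variable {N : ℕ} {Ω : Set (EucN N)} {p : ℝ}

lemma lambda1p_mul_norm_rpow_le (hp : 1 ≤ p) {w : SobPair N (ENNReal.ofReal p)}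
    (hw : w ∈ W10 N p hp Ω) :
    lambda1p N p hp Ω * ENNReal.ofReal (‖w.1‖ ^ p) ≤ ENNReal.ofReal (‖w.2‖ ^ p) := by
  have := fact_one_le_ofReal hp
  have hp0 : 0 < p := by linarith
  rcases (norm_nonneg w.1).eq_or_lt with h0 | h0
  · rw [← h0, Real.zero_rpow hp0.ne', ENNReal.ofReal_zero, mul_zero]
    exact zero_le
  have hnorm : ‖(‖w.1‖⁻¹ • w).1‖ = 1 := by
    rw [Prod.smul_fst, norm_smul, norm_inv, norm_norm, inv_mul_cancel₀ h0.ne']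
  have hle : lambda1p N p hp Ω ≤ ENNReal.ofReal (‖(‖w.1‖⁻¹ • w).2‖ ^ p) := by
    refine sInf_le ⟨_, smul_mem_W10 hp hw ‖w.1‖⁻¹, ?_, ?_⟩
    · simp only [← Real.norm_eq_abs]
      rw [integral_norm_rpow_eq_norm_rpow hp0, hnorm, Real.one_rpow]
    · rw [integral_norm_rpow_eq_norm_rpow hp0]
  calc lambda1p N p hp Ω * ENNReal.ofReal (‖w.1‖ ^ p)
      ≤ ENNReal.ofReal (‖(‖w.1‖⁻¹ • w).2‖ ^ p) * ENNReal.ofReal (‖w.1‖ ^ p) := by gcongr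
    _ = ENNReal.ofReal (‖w.2‖ ^ p) := by
        rw [← ENNReal.ofReal_mul (by positivity), Prod.smul_snd, norm_smul, norm_inv, norm_norm,
          ← Real.mul_rpow (by positivity) (by positivity), mul_right_comm,
          inv_mul_cancel₀ h0.ne', one_mul]

lemma lambda1p_mul_integral_le (hp : 1 ≤ p) {ψ : EucN N → ℝ} (hψ : IsTestFun Ω ψ) :
    lambda1p N p hp Ω * ENNReal.ofReal (∫ x, |ψ x| ^ p) ≤
      ENNReal.ofReal (∫ x, ‖fderiv ℝ ψ x‖ ^ p) := by
  have hp0 : 0 < p := by linarith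
  rw [← norm_fst_rpow_of_ae_eq hp0 (hψ.coeFn_toPair_fst _),
    ← norm_snd_rpow_of_ae_eq hp0 (hψ.coeFn_toPair_snd _)]
  exact lambda1p_mul_norm_rpow_le hp (hψ.toPair_mem_W10 hp)

lemma ofReal_le_lambda1p (hp : 1 ≤ p) {c : ℝ}
    (h : ∀ ψ, IsTestFun Ω ψ → c * ∫ x, |ψ x| ^ p ≤ ∫ x, ‖fderiv ℝ ψ x‖ ^ p) :
    ENNReal.ofReal c ≤ lambda1p N p hp Ω := by
  have := fact_one_le_ofReal hp
  have hp0 : 0 < p := by linarith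
  have hW10 : W10 N p hp Ω ⊆ {w | c * ‖w.1‖ ^ p ≤ ‖w.2‖ ^ p} := by
    have hclosed : IsClosed {w : SobPair N (ENNReal.ofReal p) | c * ‖w.1‖ ^ p ≤ ‖w.2‖ ^ p} :=
      isClosed_le (continuous_const.mul (continuous_norm_rpow continuous_fst hp0.le))
        (continuous_norm_rpow continuous_snd hp0.le)
    refine closure_minimal ?_ hclosed
    rintro w ⟨ψ, hψ, hw1, hw2⟩
    rw [mem_ofPred_eq, norm_fst_rpow_of_ae_eq hp0 hw1, norm_snd_rpow_of_ae_eq hp0 hw2]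
    exact h ψ hψ
  refine le_sInf ?_
  rintro _ ⟨w, hw, hw1, rfl⟩
  have hcw : c * ‖w.1‖ ^ p ≤ ‖w.2‖ ^ p := hW10 hw
  simp only [← Real.norm_eq_abs, integral_norm_rpow_eq_norm_rpow hp0] at hw1 ⊢
  exact ENNReal.ofReal_le_ofReal (by rwa [hw1, mul_one] at hcw)

lemma exists_isTestFun_integral_lt (hp : 1 ≤ p) {c : ℝ}
    (h : lambda1p N p hp Ω < ENNReal.ofReal c) :
    ∃ ψ, IsTestFun Ω ψ ∧ ∫ x, ‖fderiv ℝ ψ x‖ ^ p < c * ∫ x, |ψ x| ^ p := by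
  contrapose! h
  exact ofReal_le_lambda1p hp h

lemma lambda1p_le_ofReal (hp : 1 ≤ p) {ψ : EucN N → ℝ} (hψ : IsTestFun Ω ψ) {c : ℝ}
    (hpos : 0 < ∫ x, |ψ x| ^ p) (hle : ∫ x, ‖fderiv ℝ ψ x‖ ^ p ≤ c * ∫ x, |ψ x| ^ p) :
    lambda1p N p hp Ω ≤ ENNReal.ofReal c := by
  have hmul := (lambda1p_mul_integral_le hp hψ).trans (ENNReal.ofReal_le_ofReal hle)
  rw [ENNReal.ofReal_mul' hpos.le] at hmul
  exact (ENNReal.mul_le_mul_iff_left (by simpa using hpos) ENNReal.ofReal_ne_top).1 hmul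

lemma lambda1p_ne_top (hp : 1 ≤ p) (hΩ : (interior Ω).Nonempty) : lambda1p N p hp Ω ≠ ⊤ := by
  obtain ⟨x, hx⟩ := hΩ
  obtain ⟨ψ, hψΩ, hψc, hψ, -, hψx⟩ :=
    exists_contDiff_tsupport_subset (n := (⊤ : ℕ∞)) (mem_interior_iff_mem_nhds.1 hx)
  have hpos : 0 < ∫ x, |ψ x| ^ p :=
    integral_norm_rpow_pos hψ.continuous hψc (by linarith) (x := x) (by simp [hψx])
  have hle := lambda1p_le_ofReal hp (Ω := Ω) ⟨hψ, hψc, hψΩ⟩ hpos (div_mul_cancel₀ _ hpos.ne').ge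
  exact ne_top_of_le_ne_top ENNReal.ofReal_ne_top hle

end RayleighQuotients

section Line

/-- The number `(π_p)^p`, as the first eigenvalue of the interval `(-1/2, 1/2)`. -/
def piPow (p : ℝ) (hp : 1 ≤ p) : ℝ≥0∞ :=
  lambda1p 1 p hp {x : EucN 1 | x 0 ∈ Ioo (-(1/2) : ℝ) (1/2)}

/-- The identification of the line with `EucN 1`. -/
def lineEquiv : ℝ ≃ₗᵢ[ℝ] EucN 1 := (OrthonormalBasis.singleton (Fin 1) ℝ).repr

lemma lineEquiv_symm_apply (x : EucN 1) : lineEquiv.symm x = x 0 := by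
  obtain ⟨t, rfl⟩ := lineEquiv.surjective x
  have hrepr := (OrthonormalBasis.singleton (Fin 1) ℝ).repr_apply_apply t 0
  rw [OrthonormalBasis.singleton_apply, RCLike.inner_apply, map_one, mul_one] at hrepr
  rw [lineEquiv.symm_apply_apply]
  exact hrepr.symm

variable {p : ℝ} {f : ℝ → ℝ}

lemma integral_comp_lineEquiv_symm (g : ℝ → ℝ) : ∫ x, g (lineEquiv.symm x) = ∫ t, g t :=
  lineEquiv.symm.measurePreserving.integral_comp' (f := lineEquiv.symm.toMeasurableEquiv) g

lemma norm_fderiv_comp_lineEquiv_symm (f : ℝ → ℝ) (x : EucN 1) :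
    ‖fderiv ℝ (f ∘ lineEquiv.symm) x‖ = |deriv f (lineEquiv.symm x)| := by
  rw [← Real.norm_eq_abs, norm_deriv_eq_norm_fderiv]
  change ‖fderiv ℝ (f ∘ lineEquiv.symm.toContinuousLinearEquiv) x‖ = _
  rw [ContinuousLinearEquiv.comp_right_fderiv]
  exact ContinuousLinearMap.opNorm_comp_linearIsometryEquiv _ lineEquiv.symm

lemma isTestFun_comp_lineEquiv_symm {I : Set ℝ} (hf : ContDiff ℝ (⊤ : ℕ∞) f)
    (hfc : HasCompactSupport f) (hfI : tsupport f ⊆ I) :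
    IsTestFun {x : EucN 1 | x 0 ∈ I} (f ∘ lineEquiv.symm) := by
  refine ⟨hf.comp lineEquiv.symm.contDiff,
    hfc.comp_homeomorph lineEquiv.symm.toHomeomorph, fun x hx => hfI ?_⟩
  rw [← lineEquiv_symm_apply]
  exact tsupport_comp_subset_preimage f lineEquiv.symm.continuous hx

lemma integral_abs_rpow_comp_affine (p : ℝ) (f : ℝ → ℝ) (a : ℝ) {ℓ : ℝ} (hℓ : 0 < ℓ) :
    ∫ x, |f (a + ℓ * x)| ^ p = ℓ⁻¹ * ∫ x, |f x| ^ p := by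
  rw [Measure.integral_comp_mul_left (fun x => |f (a + x)| ^ p), abs_of_pos (inv_pos.2 hℓ),
    smul_eq_mul, integral_add_left_eq_self fun x => |f x| ^ p]

lemma integral_abs_deriv_rpow_comp_affine (p : ℝ) (f : ℝ → ℝ) (a : ℝ) {ℓ : ℝ} (hℓ : 0 < ℓ) :
    ∫ x, |deriv (fun y => f (a + ℓ * y)) x| ^ p = ℓ⁻¹ * (ℓ ^ p * ∫ x, |deriv f x| ^ p) := by
  have hderiv (x : ℝ) : deriv (fun y => f (a + ℓ * y)) x = ℓ * deriv f (a + ℓ * x) := by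
    rw [deriv_comp_mul_left ℓ fun y => f (a + y), deriv_comp_const_add, smul_eq_mul]
  simp only [hderiv, abs_mul, abs_of_pos hℓ, Real.mul_rpow hℓ.le (abs_nonneg _)]
  rw [integral_const_mul, integral_abs_rpow_comp_affine p (deriv f) a hℓ]
  ring

lemma hasCompactSupport_of_tsupport_subset {X E : Type*} [PseudoMetricSpace X] [ProperSpace X]
    [Zero E] {f : X → E} {S : Set X} (hS : Bornology.IsBounded S) (hf : tsupport f ⊆ S) :
    HasCompactSupport f :=
  isCompact_of_isClosed_isBounded (isClosed_tsupport f) (hS.subset hf)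

lemma tsupport_comp_affine_subset {I : Set ℝ} (hf : tsupport f ⊆ I) (a ℓ : ℝ) :
    tsupport (fun x => f (a + ℓ * x)) ⊆ {x | a + ℓ * x ∈ I} :=
  (tsupport_comp_subset_preimage f (by fun_prop)).trans fun _ hx => hf hx

lemma piPow_ne_top (hp : 1 ≤ p) : piPow p hp ≠ ⊤ := by
  have hopen : IsOpen {x : EucN 1 | x 0 ∈ Ioo (-(1/2) : ℝ) (1/2)} :=
    isOpen_Ioo.preimage (by fun_prop)
  refine lambda1p_ne_top hp ?_
  rw [hopen.interior_eq]
  exact ⟨0, by norm_num⟩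

lemma piPow_mul_integral_le (hp : 1 ≤ p) (hf : ContDiff ℝ (⊤ : ℕ∞) f) {a ℓ : ℝ} (hℓ : 0 < ℓ)
    (hfI : tsupport f ⊆ Ioo (a - ℓ / 2) (a + ℓ / 2)) :
    (piPow p hp).toReal * ∫ x, |f x| ^ p ≤ ℓ ^ p * ∫ x, |deriv f x| ^ p := by
  have hsupp : tsupport (fun x => f (a + ℓ * x)) ⊆ Ioo (-(1/2)) (1/2) := by
    refine (tsupport_comp_affine_subset hfI a ℓ).trans fun x hx => ?_
    constructor <;> nlinarith [hx.1, hx.2]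
  have hle := lambda1p_mul_integral_le hp (isTestFun_comp_lineEquiv_symm
    (f := fun x => f (a + ℓ * x)) (hf.comp (by fun_prop))
    (hasCompactSupport_of_tsupport_subset (isBounded_Ioo _ _) hsupp) hsupp)
  simp only [norm_fderiv_comp_lineEquiv_symm, Function.comp_apply] at hle
  rw [integral_comp_lineEquiv_symm fun t => |f (a + ℓ * t)| ^ p,
    integral_comp_lineEquiv_symm fun t => |deriv (fun y => f (a + ℓ * y)) t| ^ p,
    integral_abs_rpow_comp_affine p f a hℓ, integral_abs_deriv_rpow_comp_affine p f a hℓ] at hle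
  have hreal := ENNReal.toReal_mono ENNReal.ofReal_ne_top hle
  rw [ENNReal.toReal_mul, ENNReal.toReal_ofReal (by positivity),
    ENNReal.toReal_ofReal (by positivity), mul_left_comm] at hreal
  exact le_of_mul_le_mul_left hreal (inv_pos.2 hℓ)

lemma exists_integral_deriv_lt (hp : 1 ≤ p) {c : ℝ} (hc : piPow p hp < ENNReal.ofReal c) :
    ∃ f : ℝ → ℝ, ContDiff ℝ (⊤ : ℕ∞) f ∧ HasCompactSupport f ∧
      tsupport f ⊆ Ioo (-(1/2)) (1/2) ∧ ∫ x, |deriv f x| ^ p < c * ∫ x, |f x| ^ p := by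
  obtain ⟨ψ, hψ, hlt⟩ := exists_isTestFun_integral_lt hp hc
  refine ⟨ψ ∘ lineEquiv, hψ.1.comp lineEquiv.contDiff,
    hψ.2.1.comp_homeomorph lineEquiv.toHomeomorph, fun t ht => ?_, ?_⟩
  · have hmem := hψ.2.2 (tsupport_comp_subset_preimage ψ lineEquiv.continuous ht)
    rwa [mem_ofPred_eq, ← lineEquiv_symm_apply, lineEquiv.symm_apply_apply] at hmem
  · have hψ_eq : ψ = (ψ ∘ lineEquiv) ∘ lineEquiv.symm := by ext x; simp
    rw [hψ_eq] at hlt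
    simp only [norm_fderiv_comp_lineEquiv_symm, Function.comp_apply (f := ψ ∘ lineEquiv)] at hlt
    rwa [integral_comp_lineEquiv_symm fun t => |deriv (ψ ∘ lineEquiv) t| ^ p,
      integral_comp_lineEquiv_symm fun t => |(ψ ∘ lineEquiv) t| ^ p] at hlt

lemma exists_cutoff_integral_deriv_le (hp : 0 < p) (M : ℝ) {ε : ℝ} (hε : 0 < ε) :
    ∃ g : ℝ → ℝ, ContDiff ℝ (⊤ : ℕ∞) g ∧ HasCompactSupport g ∧ tsupport g ⊆ Iio M ∧
      0 < ∫ x, |g x| ^ p ∧ ∫ x, |deriv g x| ^ p ≤ ε * ∫ x, |g x| ^ p := by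
  obtain ⟨f, hf0, hfc, hf, -, hf1⟩ := exists_contDiff_tsupport_subset (n := (⊤ : ℕ∞))
    (Iio_mem_nhds (show (-1 : ℝ) < 0 by norm_num))
  have hpos : 0 < ∫ x, |f x| ^ p :=
    integral_norm_rpow_pos hf.continuous hfc hp (x := -1) (by simp [hf1])
  have hlim : Tendsto (fun ℓ : ℝ => ℓ ^ p * ∫ x, |deriv f x| ^ p) (𝓝[>] 0) (𝓝 0) := by
    have h := ((Real.continuousAt_rpow_const 0 p (.inr hp.le)).tendsto.mono_left
      (nhdsWithin_le_nhds (s := Ioi 0))).mul_const (∫ x, |deriv f x| ^ p)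
    rwa [Real.zero_rpow hp.ne', zero_mul] at h
  obtain ⟨ℓ, hℓε, hℓ_mem⟩ := ((hlim.eventually_le_const (mul_pos hε hpos)).and
    self_mem_nhdsWithin).exists
  have hℓ : 0 < ℓ := hℓ_mem
  have hint := integral_abs_rpow_comp_affine p f (-(ℓ * M)) hℓ
  refine ⟨fun x => f (-(ℓ * M) + ℓ * x), hf.comp (by fun_prop), ?_, ?_, ?_, ?_⟩
  · exact hfc.comp_homeomorph ((Homeomorph.mulLeft₀ ℓ hℓ.ne').trans (Homeomorph.addLeft _))
  · refine (tsupport_comp_affine_subset hf0 _ ℓ).trans fun x hx => ?_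
    rw [mem_ofPred_eq, mem_Iio] at hx
    exact lt_of_mul_lt_mul_left (by linarith) hℓ.le
  · rw [hint]
    positivity
  · rw [hint, integral_abs_deriv_rpow_comp_affine p f _ hℓ, mul_left_comm ε]
    exact mul_le_mul_of_nonneg_left hℓε (inv_pos.2 hℓ).le

end Line

section Plane

variable {p : ℝ}

lemma pt2_apply_zero (a b : ℝ) : pt2 a b 0 = a := by
  simp [pt2]

lemma pt2_apply_one (a b : ℝ) : pt2 a b 1 = b := by
  simp [pt2]

lemma pt2_eta (q : EucN 2) : pt2 (q 0) (q 1) = q := by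
  ext i
  fin_cases i <;> simp [pt2]

lemma continuous_pt2 : Continuous fun z : ℝ × ℝ => pt2 z.1 z.2 :=
  (EuclideanSpace.equiv (Fin 2) ℝ).symm.continuous.comp (by fun_prop)

lemma measurePreserving_pt2 : MeasurePreserving fun z : ℝ × ℝ => pt2 z.1 z.2 :=
  (PiLp.volume_preserving_toLp (Fin 2)).comp (volume_preserving_finTwoArrow ℝ).symm

lemma measurableEmbedding_pt2 : MeasurableEmbedding fun z : ℝ × ℝ => pt2 z.1 z.2 :=
  (MeasurableEquiv.toLp 2 (Fin 2 → ℝ)).measurableEmbedding.comp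
    (MeasurableEquiv.finTwoArrow (α := ℝ)).symm.measurableEmbedding

lemma integrable_prod_comp_pt2 {f : EucN 2 → ℝ} (hf : Integrable f) :
    Integrable (fun z : ℝ × ℝ => f (pt2 z.1 z.2)) (volume.prod volume) :=
  (measurePreserving_pt2.integrable_comp_emb measurableEmbedding_pt2).2 hf

lemma integral_eq_integral_integral_pt2 {f : EucN 2 → ℝ} (hf : Integrable f) :
    ∫ q, f q = ∫ x, ∫ y, f (pt2 x y) := by
  rw [← measurePreserving_pt2.integral_comp measurableEmbedding_pt2 f]
  exact integral_prod _ (integrable_prod_comp_pt2 hf)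

lemma integral_mul_coord (u v : ℝ → ℝ) :
    ∫ q : EucN 2, u (q 0) * v (q 1) = (∫ x, u x) * ∫ y, v y := by
  rw [← measurePreserving_pt2.integral_comp measurableEmbedding_pt2 fun q => u (q 0) * v (q 1)]
  simp only [pt2_apply_zero, pt2_apply_one]
  exact integral_prod_mul u v

lemma integrable_mul_coord {u v : ℝ → ℝ} (hu : Integrable u) (hv : Integrable v) :
    Integrable fun q : EucN 2 => u (q 0) * v (q 1) := by
  rw [← measurePreserving_pt2.integrable_comp_emb measurableEmbedding_pt2]
  simp only [Function.comp_def, pt2_apply_zero, pt2_apply_one]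
  exact hu.mul_prod hv

lemma hasDerivAt_pt2 (x y : ℝ) : HasDerivAt (fun y => pt2 x y) (pt2 0 1) y := by
  have haffine : (fun y => pt2 x y) = fun y => pt2 x 0 + y • pt2 0 1 := by
    ext y i
    fin_cases i <;> simp [pt2]
  rw [haffine]
  simpa using ((hasDerivAt_id y).smul_const (pt2 0 1)).const_add (pt2 x 0)

lemma abs_deriv_comp_pt2_le {ψ : EucN 2 → ℝ} (hψ : Differentiable ℝ ψ) (x y : ℝ) :
    |deriv (fun y => ψ (pt2 x y)) y| ≤ ‖fderiv ℝ ψ (pt2 x y)‖ := by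
  have hderiv : deriv (fun y => ψ (pt2 x y)) y = fderiv ℝ ψ (pt2 x y) (pt2 0 1) :=
    ((hψ _).hasFDerivAt.comp_hasDerivAt y (hasDerivAt_pt2 x y)).deriv
  have hunit : ‖pt2 0 1‖ = 1 := by simp [EuclideanSpace.norm_eq, pt2]
  simpa only [hderiv, hunit, mul_one, Real.norm_eq_abs] using
    (fderiv ℝ ψ (pt2 x y)).le_opNorm (pt2 0 1)

lemma isometry_pt2 (x : ℝ) : Isometry fun y => pt2 x y :=
  .of_dist_eq fun y z => by simp [EuclideanSpace.dist_eq, pt2, Real.sqrt_sq_eq_abs, Real.dist_eq]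

lemma piPow_mul_integral_section_le (hp : 1 ≤ p) {ψ : EucN 2 → ℝ} {A : Set (EucN 2)}
    (hψ : IsTestFun A ψ) {x a ℓ : ℝ} (hℓ : 0 < ℓ)
    (hA : ∀ y, pt2 x y ∈ A → y ∈ Ioo (a - ℓ / 2) (a + ℓ / 2)) :
    (piPow p hp).toReal * ∫ y, |ψ (pt2 x y)| ^ p ≤
      ℓ ^ p * ∫ y, ‖fderiv ℝ ψ (pt2 x y)‖ ^ p := by
  have hp0 : 0 < p := by linarith
  have hemb : IsClosedEmbedding fun y => pt2 x y := (isometry_pt2 x).isClosedEmbedding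
  have hsupp : tsupport (fun y => ψ (pt2 x y)) ⊆ Ioo (a - ℓ / 2) (a + ℓ / 2) := fun y hy =>
    hA y (hψ.2.2 (tsupport_comp_subset_preimage ψ hemb.continuous hy))
  have hsmooth : ContDiff ℝ (⊤ : ℕ∞) fun y => ψ (pt2 x y) := by
    refine hψ.1.comp ((EuclideanSpace.equiv (Fin 2) ℝ).symm.contDiff.comp (contDiff_pi.2 ?_))
    intro i
    fin_cases i
    exacts [contDiff_const, contDiff_id]
  refine (piPow_mul_integral_le hp hsmooth hℓ hsupp).trans
    (mul_le_mul_of_nonneg_left (integral_mono_of_nonneg ?_ ?_ ?_) (by positivity))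
  · exact ae_of_all _ fun y => by positivity
  · exact integrable_norm_rpow (hψ.continuous_fderiv.comp hemb.continuous)
      ((hψ.2.1.fderiv ℝ).comp_isClosedEmbedding hemb) hp0
  · exact ae_of_all _ fun y =>
      Real.rpow_le_rpow (abs_nonneg _) (abs_deriv_comp_pt2_le hψ.differentiable x y) hp0.le

lemma ofReal_piPow_div_rpow_le_lambda1p (hp : 1 ≤ p) {A : Set (EucN 2)} {ℓ : ℝ} (hℓ : 0 < ℓ)
    (hA : ∀ x, ∃ a, ∀ y, pt2 x y ∈ A → y ∈ Ioo (a - ℓ / 2) (a + ℓ / 2)) :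
    ENNReal.ofReal ((piPow p hp).toReal / ℓ ^ p) ≤ lambda1p 2 p hp A := by
  have hp0 : 0 < p := by linarith
  refine ofReal_le_lambda1p hp fun ψ hψ => ?_
  have hint : Integrable fun q => |ψ q| ^ p := integrable_norm_rpow hψ.1.continuous hψ.2.1 hp0
  have hint' : Integrable fun q => ‖fderiv ℝ ψ q‖ ^ p :=
    integrable_norm_rpow hψ.continuous_fderiv (hψ.2.1.fderiv ℝ) hp0
  rw [div_mul_eq_mul_div, div_le_iff₀' (by positivity), integral_eq_integral_integral_pt2 hint,
    integral_eq_integral_integral_pt2 hint', ← integral_const_mul, ← integral_const_mul]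
  refine integral_mono ((integrable_prod_comp_pt2 hint).integral_prod_left.const_mul _)
    ((integrable_prod_comp_pt2 hint').integral_prod_left.const_mul _) fun x => ?_
  obtain ⟨a, ha⟩ := hA x
  exact piPow_mul_integral_section_le hp hψ hℓ ha

lemma isTestFun_mul_coord {g f : ℝ → ℝ} {I J : Set ℝ} (hg : ContDiff ℝ (⊤ : ℕ∞) g)
    (hgc : HasCompactSupport g) (hgI : tsupport g ⊆ I) (hf : ContDiff ℝ (⊤ : ℕ∞) f)
    (hfc : HasCompactSupport f) (hfJ : tsupport f ⊆ J) :
    IsTestFun {q : EucN 2 | q 0 ∈ I ∧ q 1 ∈ J} fun q => g (q 0) * f (q 1) := by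
  have hsupp : (Function.support fun q : EucN 2 => g (q 0) * f (q 1)) ⊆
      (fun z : ℝ × ℝ => pt2 z.1 z.2) '' (tsupport g ×ˢ tsupport f) := fun q hq =>
    ⟨(q 0, q 1), ⟨subset_tsupport g (left_ne_zero_of_mul hq),
      subset_tsupport f (right_ne_zero_of_mul hq)⟩, pt2_eta q⟩
  have hcompact := (hgc.isCompact.prod hfc).image continuous_pt2
  refine ⟨by fun_prop, .of_support_subset_isCompact hcompact hsupp, ?_⟩
  refine (closure_minimal hsupp hcompact.isClosed).trans ?_
  rintro _ ⟨z, ⟨hz0, hz1⟩, rfl⟩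
  exact ⟨by simpa only [pt2_apply_zero] using hgI hz0,
    by simpa only [pt2_apply_one] using hfJ hz1⟩

lemma norm_fderiv_mul_coord_le {g f : ℝ → ℝ} (hg : Differentiable ℝ g) (hf : Differentiable ℝ f)
    (q : EucN 2) :
    ‖fderiv ℝ (fun q : EucN 2 => g (q 0) * f (q 1)) q‖ ≤
      |deriv g (q 0)| * |f (q 1)| + |g (q 0)| * |deriv f (q 1)| := by
  let coord (i : Fin 2) : EucN 2 →L[ℝ] ℝ := EuclideanSpace.proj i
  have hcoord (i : Fin 2) : ‖coord i‖ ≤ 1 :=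
    ContinuousLinearMap.opNorm_le_bound _ zero_le_one fun q =>
      (PiLp.norm_apply_le q i).trans_eq (one_mul _).symm
  have hcomp {u : ℝ → ℝ} (hu : Differentiable ℝ u) (i : Fin 2) :
      HasFDerivAt (fun q : EucN 2 => u (q i)) (deriv u (q i) • coord i) q :=
    (hu (coord i q)).hasDerivAt.comp_hasFDerivAt q (coord i).hasFDerivAt
  have hprod : fderiv ℝ (fun q : EucN 2 => g (q 0) * f (q 1)) q = _ :=
    ((hcomp hg 0).mul (hcomp hf 1)).fderiv
  rw [hprod, add_comm]
  refine (norm_add_le _ _).trans (add_le_add ?_ ?_)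
  · rw [norm_smul, norm_smul, Real.norm_eq_abs, Real.norm_eq_abs, mul_comm |f _|]
    nlinarith [hcoord 0, mul_nonneg (abs_nonneg (deriv g (q 0))) (abs_nonneg (f (q 1)))]
  · rw [norm_smul, norm_smul, Real.norm_eq_abs, Real.norm_eq_abs]
    nlinarith [hcoord 1, mul_nonneg (abs_nonneg (g (q 0))) (abs_nonneg (deriv f (q 1)))]

lemma add_rpow_le_weighted (hp : 1 ≤ p) {t a b : ℝ} (ht0 : 0 < t) (ht1 : t < 1) (ha : 0 ≤ a)
    (hb : 0 ≤ b) : (a + b) ^ p ≤ t ^ (1 - p) * a ^ p + (1 - t) ^ (1 - p) * b ^ p := by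
  have ht1' : 0 < 1 - t := sub_pos.2 ht1
  have hconv := (convexOn_rpow hp).2 (x := a / t) (y := b / (1 - t)) (mem_Ici.2 (by positivity))
    (mem_Ici.2 (by positivity)) ht0.le ht1'.le (by ring)
  simp only [smul_eq_mul] at hconv
  rw [mul_div_cancel₀ _ ht0.ne', mul_div_cancel₀ _ ht1'.ne', Real.div_rpow ha ht0.le,
    Real.div_rpow hb ht1'.le] at hconv
  rw [Real.rpow_sub ht0, Real.rpow_sub ht1', Real.rpow_one, Real.rpow_one]
  exact hconv.trans_eq (by ring)

lemma integral_norm_fderiv_mul_coord_le (hp : 1 ≤ p) {g f : ℝ → ℝ}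
    (hg : ContDiff ℝ (⊤ : ℕ∞) g) (hgc : HasCompactSupport g) (hf : ContDiff ℝ (⊤ : ℕ∞) f)
    (hfc : HasCompactSupport f) {t : ℝ} (ht0 : 0 < t) (ht1 : t < 1) :
    ∫ q, ‖fderiv ℝ (fun q : EucN 2 => g (q 0) * f (q 1)) q‖ ^ p ≤
      t ^ (1 - p) * ((∫ x, |deriv g x| ^ p) * ∫ y, |f y| ^ p) +
        (1 - t) ^ (1 - p) * ((∫ x, |g x| ^ p) * ∫ y, |deriv f y| ^ p) := by
  have hp0 : 0 < p := by linarith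
  have hint {u : ℝ → ℝ} (hu : ContDiff ℝ (⊤ : ℕ∞) u) (huc : HasCompactSupport u) :
      Integrable (fun x => |u x| ^ p) ∧ Integrable fun x => |deriv u x| ^ p :=
    ⟨integrable_norm_rpow hu.continuous huc hp0,
      integrable_norm_rpow (hu.continuous_deriv (by simp)) huc.deriv hp0⟩
  have hint_left := (integrable_mul_coord (hint hg hgc).2 (hint hf hfc).1).const_mul (t ^ (1 - p))
  have hint_right :=
    (integrable_mul_coord (hint hg hgc).1 (hint hf hfc).2).const_mul ((1 - t) ^ (1 - p))
  rw [← integral_mul_coord, ← integral_mul_coord, ← integral_const_mul, ← integral_const_mul,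
    ← integral_add hint_left hint_right]
  refine integral_mono_of_nonneg (ae_of_all _ fun q => by positivity)
    (hint_left.add hint_right) (ae_of_all _ fun q => ?_)
  refine (Real.rpow_le_rpow (norm_nonneg _) (norm_fderiv_mul_coord_le
    (hg.differentiable (by simp)) (hf.differentiable (by simp)) q) hp0.le).trans ?_
  refine (add_rpow_le_weighted hp ht0 ht1 (by positivity) (by positivity)).trans_eq ?_
  simp only [Real.mul_rpow (abs_nonneg _) (abs_nonneg _)]

lemma exists_weights_of_lt (p : ℝ) {a b m : ℝ} (hab : a < b) (hm : 0 < m) :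
    ∃ t ε : ℝ, 0 < t ∧ t < 1 ∧ 0 < ε ∧ t ^ (1 - p) * (ε * m) + (1 - t) ^ (1 - p) * a = b := by
  have hcont : ContinuousAt (fun t : ℝ => (1 - t) ^ (1 - p) * a) 0 :=
    ((continuousAt_const.sub continuousAt_id).rpow_const (.inl (by simp))).mul_const a
  have hev : ∀ᶠ t : ℝ in 𝓝[>] 0, (1 - t) ^ (1 - p) * a < b :=
    (hcont.eventually_lt_const (by simpa using hab)).filter_mono nhdsWithin_le_nhds
  obtain ⟨t, ht, ht0, ht1⟩ := (hev.and (Ioo_mem_nhdsGT one_pos)).exists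
  refine ⟨t, (b - (1 - t) ^ (1 - p) * a) / (t ^ (1 - p) * m), ht0, ht1,
    div_pos (sub_pos.2 ht) (by positivity), ?_⟩
  field_simp
  ring

lemma lambda1p_le_ofReal_of_piPow_lt (hp : 1 ≤ p) {A : Set (EucN 2)} (M : ℝ)
    (hA : {q : EucN 2 | q 0 ∈ Iio M ∧ q 1 ∈ Ioo (-(1/2)) (1/2)} ⊆ A) {c : ℝ}
    (hc : piPow p hp < ENNReal.ofReal c) : lambda1p 2 p hp A ≤ ENNReal.ofReal c := by
  have hp0 : 0 < p := by linarith
  obtain ⟨f, hf, hfc, hfJ, hlt⟩ := exists_integral_deriv_lt hp hc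
  have hfpos : 0 < ∫ y, |f y| ^ p := by
    have hc0 : 0 < c := ENNReal.ofReal_pos.1 (zero_le.trans_lt hc)
    exact pos_of_mul_pos_right ((integral_nonneg fun y => by positivity).trans_lt hlt) hc0.le
  obtain ⟨t, ε, ht0, ht1, hε, hsum⟩ := exists_weights_of_lt p hlt hfpos
  obtain ⟨g, hg, hgc, hgI, hgpos, hgε⟩ := exists_cutoff_integral_deriv_le hp0 M hε
  have hψ := isTestFun_mul_coord hg hgc hgI hf hfc hfJ
  have hmass : ∫ q : EucN 2, |g (q 0) * f (q 1)| ^ p = (∫ x, |g x| ^ p) * ∫ y, |f y| ^ p := by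
    simp only [abs_mul, Real.mul_rpow (abs_nonneg _) (abs_nonneg _)]
    exact integral_mul_coord (fun x => |g x| ^ p) fun y => |f y| ^ p
  refine lambda1p_le_ofReal hp ⟨hψ.1, hψ.2.1, hψ.2.2.trans hA⟩ (by rw [hmass]; positivity) ?_
  calc ∫ q, ‖fderiv ℝ (fun q : EucN 2 => g (q 0) * f (q 1)) q‖ ^ p
      ≤ t ^ (1 - p) * ((∫ x, |deriv g x| ^ p) * ∫ y, |f y| ^ p) +
          (1 - t) ^ (1 - p) * ((∫ x, |g x| ^ p) * ∫ y, |deriv f y| ^ p) :=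
        integral_norm_fderiv_mul_coord_le hp hg hgc hf hfc ht0 ht1
    _ ≤ t ^ (1 - p) * ((ε * ∫ x, |g x| ^ p) * ∫ y, |f y| ^ p) +
          (1 - t) ^ (1 - p) * ((∫ x, |g x| ^ p) * ∫ y, |deriv f y| ^ p) := by gcongr
    _ = (∫ x, |g x| ^ p) * (t ^ (1 - p) * (ε * ∫ y, |f y| ^ p) +
          (1 - t) ^ (1 - p) * ∫ y, |deriv f y| ^ p) := by ring
    _ = c * ∫ q : EucN 2, |g (q 0) * f (q 1)| ^ p := by
        rw [hsum, hmass]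
        ring

lemma lambda1p_le_piPow (hp : 1 ≤ p) {A : Set (EucN 2)} (M : ℝ)
    (hA : {q : EucN 2 | q 0 ∈ Iio M ∧ q 1 ∈ Ioo (-(1/2)) (1/2)} ⊆ A) :
    lambda1p 2 p hp A ≤ piPow p hp := by
  refine le_of_not_gt fun hlt => ?_
  obtain ⟨c, -, hc, hcA⟩ := ENNReal.lt_iff_exists_real_btwn.1 hlt
  exact hcA.not_ge (lambda1p_le_ofReal_of_piPow_lt hp M hA hc)

end Plane

section DisjointSupports

variable {ι X E : Type*} [Fintype ι] [MeasurableSpace X] {μ : Measure X} [NormedAddCommGroup E]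
  {p : ℝ}

lemma norm_sum_rpow_of_pairwise_eq_zero (hp : 0 < p) {v : ι → E}
    (hv : Pairwise fun i j => v i = 0 ∨ v j = 0) : ‖∑ i, v i‖ ^ p = ∑ i, ‖v i‖ ^ p := by
  by_cases h : ∃ i, v i ≠ 0
  · obtain ⟨i, hi⟩ := h
    have hzero (j : ι) (hji : j ≠ i) : v j = 0 := (hv hji).resolve_right hi
    rw [Fintype.sum_eq_single i hzero,
      Fintype.sum_eq_single i fun j hji => by rw [hzero j hji, norm_zero, Real.zero_rpow hp.ne']]
  · push Not at h
    simp [h, Real.zero_rpow hp.ne']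

lemma norm_sum_rpow_of_ae_disjoint (hp : 0 < p) {f : ι → Lp E (ENNReal.ofReal p) μ}
    (hf : Pairwise fun i j => ∀ᵐ x ∂μ, f i x = 0 ∨ f j x = 0) :
    ‖∑ i, f i‖ ^ p = ∑ i, ‖f i‖ ^ p := by
  have hint (i : ι) : Integrable (fun x => ‖f i x‖ ^ p) μ := by
    simpa only [ENNReal.toReal_ofReal hp.le] using
      (Lp.memLp (f i)).integrable_norm_rpow (by simpa using hp) ENNReal.ofReal_ne_top
  simp only [← integral_norm_rpow_eq_norm_rpow hp]
  rw [← integral_finsetSum _ fun i _ => hint i]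
  have hdisj : ∀ᵐ x ∂μ, Pairwise fun i j => f i x = 0 ∨ f j x = 0 :=
    ae_all_iff.2 fun i => ae_all_iff.2 fun j => eventually_imp_distrib_left.2 fun hij => hf hij
  refine integral_congr_ae ?_
  filter_upwards [Lp.coeFn_fun_finsetSum Finset.univ f, hdisj] with x hsum hx
  rw [hsum, norm_sum_rpow_of_pairwise_eq_zero hp hx]

lemma norm_sum_smul_rpow_of_ae_disjoint [NormedSpace ℝ E] (hp : 1 ≤ p)
    {f : ι → Lp E (ENNReal.ofReal p) μ}
    (hf : Pairwise fun i j => ∀ᵐ x ∂μ, f i x = 0 ∨ f j x = 0) (c : ι → ℝ) :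
    ‖∑ i, c i • f i‖ ^ p = ∑ i, |c i| ^ p * ‖f i‖ ^ p := by
  have := fact_one_le_ofReal hp
  have hdisj : Pairwise fun i j => ∀ᵐ x ∂μ, (c i • f i) x = 0 ∨ (c j • f j) x = 0 := by
    intro i j hij
    filter_upwards [hf hij, Lp.coeFn_smul (c i) (f i), Lp.coeFn_smul (c j) (f j)] with x hx hi hj
    rw [hi, hj, Pi.smul_apply, Pi.smul_apply]
    exact hx.imp (fun h => by rw [h, smul_zero]) fun h => by rw [h, smul_zero]
  rw [norm_sum_rpow_of_ae_disjoint (by linarith) hdisj]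
  simp only [norm_smul, Real.norm_eq_abs, Real.mul_rpow (abs_nonneg _) (norm_nonneg _)]

end DisjointSupports

section MinMax

variable {N k : ℕ} {Ω : Set (EucN N)} {p : ℝ}

lemma gradient_eq_zero_of_notMem_tsupport {ψ : EucN N → ℝ} {x : EucN N} (hx : x ∉ tsupport ψ) :
    gradient ψ x = 0 := by
  rw [← norm_eq_zero, norm_gradient_eq_norm_fderiv, norm_eq_zero]
  exact Function.notMem_support.1 fun h => hx (support_fderiv_subset ℝ h)

lemma lambdaLS_le_of_forall_sum_smul (hp : 1 ≤ p) {w : Fin k → SobPair N (ENNReal.ofReal p)}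
    (hw : ∀ i, w i ∈ W10 N p hp Ω) (hne : ∀ a : Fin k → ℝ, a ≠ 0 → (∑ i, a i • w i).1 ≠ 0) {c : ℝ}
    (hc : ∀ a : Fin k → ℝ, ‖(∑ i, a i • w i).2‖ ^ p ≤ c * ‖(∑ i, a i • w i).1‖ ^ p) :
    lambdaLS N p hp Ω k ≤ ENNReal.ofReal c := by
  have := fact_one_le_ofReal hp
  have hp0 : 0 < p := by linarith
  let S (a : Fin k → ℝ) : SobPair N (ENNReal.ofReal p) := ∑ i, a i • w i
  let F (a : Fin k → ℝ) : SobPair N (ENNReal.ofReal p) := ‖(S a).1‖⁻¹ • S a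
  have hS : Continuous S := by fun_prop
  have hpos {a : Fin k → ℝ} (ha : a ∈ l1Sphere k) : 0 < ‖(S a).1‖ :=
    norm_pos_iff.2 (hne a (ne_zero_of_mem_l1Sphere ha))
  have hF : ContinuousOn F (l1Sphere k) :=
    ((continuous_fst.comp hS).norm.continuousOn.inv₀ fun a ha => (hpos ha).ne').smul hS.continuousOn
  have hFneg (a : Fin k → ℝ) : F (-a) = -F a := by
    simp [F, S, neg_smul, Finset.sum_neg_distrib]
  have hmem : F '' l1Sphere k ∈ SobClass N p hp Ω k := by
    refine ⟨?_, ?_, ?_, (isCompact_l1Sphere k).image_of_continuousOn hF,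
      (genusGE_l1Sphere k).image hF fun a _ => hFneg a⟩
    · rintro _ ⟨a, -, rfl⟩
      exact smul_mem_W10 hp (sum_smul_mem_W10 hp hw a) _
    · rintro _ ⟨a, ha, rfl⟩
      simp only [← Real.norm_eq_abs]
      rw [integral_norm_rpow_eq_norm_rpow hp0, Prod.smul_fst, norm_smul, norm_inv, norm_norm,
        inv_mul_cancel₀ (hpos ha).ne', Real.one_rpow]
    · rintro _ ⟨a, ha, rfl⟩
      exact ⟨-a, neg_mem_l1Sphere ha, hFneg a⟩
  refine (iInf₂_le _ hmem).trans (iSup₂_le ?_)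
  rintro _ ⟨a, ha, rfl⟩
  refine ENNReal.ofReal_le_ofReal ?_
  rw [integral_norm_rpow_eq_norm_rpow hp0, Prod.smul_snd, norm_smul, norm_inv, norm_norm,
    Real.mul_rpow (by positivity) (by positivity), Real.inv_rpow (by positivity),
    inv_mul_le_iff₀ (Real.rpow_pos_of_pos (hpos ha) p), mul_comm]
  exact hc a

lemma lambdaLS_le_of_pairwise_disjoint (hp : 1 ≤ p) {ψ : Fin k → EucN N → ℝ}
    (hψ : ∀ i, IsTestFun Ω (ψ i))
    (hdisj : Pairwise fun i j => Disjoint (tsupport (ψ i)) (tsupport (ψ j)))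
    (hpos : ∀ i, 0 < ∫ x, |ψ i x| ^ p) {c : ℝ}
    (hc : ∀ i, ∫ x, ‖fderiv ℝ (ψ i) x‖ ^ p ≤ c * ∫ x, |ψ i x| ^ p) :
    lambdaLS N p hp Ω k ≤ ENNReal.ofReal c := by
  have hp0 : 0 < p := by linarith
  let w (i : Fin k) := (hψ i).toPair (ENNReal.ofReal p)
  have hfst (a : Fin k → ℝ) :
      ‖(∑ i, a i • w i).1‖ ^ p = ∑ i, |a i| ^ p * ∫ x, |ψ i x| ^ p := by
    simp only [Prod.fst_sum, Prod.smul_fst,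
      ← norm_fst_rpow_of_ae_eq hp0 ((hψ _).coeFn_toPair_fst _)]
    refine norm_sum_smul_rpow_of_ae_disjoint hp (fun i j hij => ?_) a
    filter_upwards [(hψ i).coeFn_toPair_fst _, (hψ j).coeFn_toPair_fst _] with x hi hj
    rw [hi, hj]
    by_contra! h
    exact disjoint_left.1 (hdisj hij) (subset_tsupport _ h.1) (subset_tsupport _ h.2)
  have hsnd (a : Fin k → ℝ) :
      ‖(∑ i, a i • w i).2‖ ^ p = ∑ i, |a i| ^ p * ∫ x, ‖fderiv ℝ (ψ i) x‖ ^ p := by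
    simp only [Prod.snd_sum, Prod.smul_snd,
      ← norm_snd_rpow_of_ae_eq hp0 ((hψ _).coeFn_toPair_snd _)]
    refine norm_sum_smul_rpow_of_ae_disjoint hp (fun i j hij => ?_) a
    filter_upwards [(hψ i).coeFn_toPair_snd _, (hψ j).coeFn_toPair_snd _] with x hi hj
    rw [hi, hj]
    by_cases hx : x ∈ tsupport (ψ i)
    · exact .inr (gradient_eq_zero_of_notMem_tsupport (disjoint_left.1 (hdisj hij) hx))
    · exact .inl (gradient_eq_zero_of_notMem_tsupport hx)
  refine lambdaLS_le_of_forall_sum_smul hp (w := w) (fun i => (hψ i).toPair_mem_W10 hp)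
    (fun a ha h0 => ?_) fun a => ?_
  · obtain ⟨i, hi⟩ := Function.ne_iff.1 ha
    have hsum : 0 < ∑ i, |a i| ^ p * ∫ x, |ψ i x| ^ p :=
      Finset.sum_pos' (fun j _ => mul_nonneg (by positivity) (hpos j).le)
        ⟨i, Finset.mem_univ i, mul_pos (Real.rpow_pos_of_pos (abs_pos.2 hi) p) (hpos i)⟩
    rw [← hfst, h0, Lp.norm_zero, Real.zero_rpow hp0.ne'] at hsum
    exact hsum.false
  · rw [hfst, hsnd, Finset.mul_sum]
    refine Finset.sum_le_sum fun i _ => ?_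
    rw [mul_left_comm]
    exact mul_le_mul_of_nonneg_left (hc i) (by positivity)

end MinMax

section PoincareAtInfinity

variable {p : ℝ} {A : Set (EucN 2)}

lemma Einfty_le_piPow (hp : 1 ≤ p)
    (hA : {q : EucN 2 | q 0 < 0 ∧ q 1 ∈ Ioo (-(1/2)) (1/2)} ⊆ A) :
    Einfty 2 p hp A ≤ piPow p hp := by
  refine iSup₂_le fun R hR => lambda1p_le_piPow hp (-R) ?_
  rintro q ⟨hq0 : q 0 < -R, hq1⟩
  have hR : 0 < R := hR
  refine ⟨hA ⟨by linarith, hq1⟩, fun hq => ?_⟩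
  have hnorm : ‖q‖ ≤ R := mem_closedBall_zero_iff.1 (closure_ball_subset_closedBall hq)
  have hcoord : |q 0| ≤ ‖q‖ := PiLp.norm_apply_le q 0
  linarith [neg_le_abs (q 0)]

lemma piPow_le_Einfty (hp : 1 ≤ p) (H : ℝ → ℝ)
    (hA : ∀ ℓ > 1, ∃ R, ∀ q ∈ A, R < ‖q‖ → |q 1 - H (q 0)| < ℓ / 2) :
    piPow p hp ≤ Einfty 2 p hp A := by
  have hlower (ℓ : ℝ) (hℓ : 1 < ℓ) :
      ENNReal.ofReal ((piPow p hp).toReal / ℓ ^ p) ≤ Einfty 2 p hp A := by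
    obtain ⟨R, hR⟩ := hA ℓ hℓ
    have hR1 : 0 < max R 1 := by positivity
    refine (ofReal_piPow_div_rpow_le_lambda1p hp (zero_lt_one.trans hℓ) fun x =>
      ⟨H x, fun y hy => ?_⟩).trans (le_iSup₂_of_le (max R 1) hR1 le_rfl)
    have hnorm : R < ‖pt2 x y‖ := by
      have hout := hy.2
      rw [closure_ball _ hR1.ne', mem_closedBall_zero_iff, not_le] at hout
      exact (le_max_left R 1).trans_lt hout
    have habs := hR _ hy.1 hnorm
    rw [pt2_apply_zero, pt2_apply_one, abs_lt] at habs
    constructor <;> linarith [habs.1, habs.2]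
  have hlim : Tendsto (fun ℓ : ℝ => ENNReal.ofReal ((piPow p hp).toReal / ℓ ^ p)) (𝓝[>] 1)
      (𝓝 (piPow p hp)) := by
    have hcont : ContinuousAt (fun ℓ : ℝ => (piPow p hp).toReal / ℓ ^ p) 1 :=
      continuousAt_const.div (Real.continuousAt_rpow_const 1 p (.inl one_ne_zero)) (by simp)
    have h := ENNReal.tendsto_ofReal (hcont.tendsto.mono_left (nhdsWithin_le_nhds (s := Ioi 1)))
    rwa [Real.one_rpow, div_one, ENNReal.ofReal_toReal (piPow_ne_top hp)] at h
  exact le_of_tendsto hlim (eventually_nhdsWithin_of_forall hlower)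

end PoincareAtInfinity

section Chain

/-- The abscissa `τ_n` of the centre of the `n`-th block of a chain. -/
def chainCenter (L : ℕ → ℝ) (n : ℕ) : ℝ := 2 * (∑ i ∈ Finset.range n, L i) + L n

/-- The set obtained by placing the truncations of the sets `B n` to the slabs
`[-L n, L n] × ℝ` side by side, to the right of the half-strip `(-∞, 0) × (-1/2, 1/2)`. -/
def chain (B : ℕ → Set (EucN 2)) (L : ℕ → ℝ) : Set (EucN 2) :=
  {q | q 0 < 0 ∧ q 1 ∈ Ioo (-(1/2) : ℝ) (1/2)} ∪
    ⋃ n, (fun q => q + chainCenter L n • pt2 1 0) '' (B n ∩ {q | q 0 ∈ Icc (-(L n)) (L n)})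

/-- The function whose graph carries the graphs of the `h n` over the successive blocks of a
chain. -/
def chainProfile (h : ℕ → ℝ → ℝ) (L : ℕ → ℝ) (x : ℝ) : ℝ := ∑' n, h n (x - chainCenter L n)

lemma add_smul_pt2_apply_zero (q : EucN 2) (t : ℝ) : (q + t • pt2 1 0) 0 = q 0 + t := by
  simp [pt2]

lemma add_smul_pt2_apply_one (q : EucN 2) (t : ℝ) : (q + t • pt2 1 0) 1 = q 1 := by
  simp [pt2]

variable {L : ℕ → ℝ}

lemma le_chainCenter (hL : ∀ n, 0 ≤ L n) (n : ℕ) : L n ≤ chainCenter L n :=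
  le_add_of_nonneg_left (mul_nonneg zero_le_two (Finset.sum_nonneg fun i _ => hL i))

lemma chainCenter_add_le_sub (hL : ∀ n, 0 ≤ L n) {m n : ℕ} (hmn : m < n) :
    chainCenter L m + L m ≤ chainCenter L n - L n := by
  have hsum : ∑ i ∈ Finset.range (m + 1), L i ≤ ∑ i ∈ Finset.range n, L i :=
    Finset.sum_le_sum_of_subset_of_nonneg (Finset.range_mono hmn) fun i _ _ => hL i
  rw [Finset.sum_range_succ] at hsum
  unfold chainCenter
  linarith

lemma le_abs_sub_chainCenter (hL : ∀ n, 0 ≤ L n) {m n : ℕ} (hmn : m ≠ n) {x : ℝ}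
    (hx : |x - chainCenter L n| ≤ L n) : L m ≤ |x - chainCenter L m| := by
  rw [abs_le] at hx
  rcases hmn.lt_or_gt with h | h
  · exact le_abs.2 (.inl (by linarith [chainCenter_add_le_sub hL h]))
  · exact le_abs.2 (.inr (by linarith [chainCenter_add_le_sub hL h]))

variable {h : ℕ → ℝ → ℝ}

lemma chainProfile_of_neg (hL : ∀ n, 0 ≤ L n) (h0 : ∀ n t, L n ≤ |t| → h n t = 0) {x : ℝ}
    (hx : x < 0) : chainProfile h L x = 0 := by
  have hzero (n : ℕ) : h n (x - chainCenter L n) = 0 :=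
    h0 n _ (le_abs.2 (.inr (by linarith [le_chainCenter hL n])))
  simp only [chainProfile, hzero, tsum_zero]

lemma chainProfile_of_abs_sub_le (hL : ∀ n, 0 ≤ L n) (h0 : ∀ n t, L n ≤ |t| → h n t = 0)
    {n : ℕ} {x : ℝ} (hx : |x - chainCenter L n| ≤ L n) :
    chainProfile h L x = h n (x - chainCenter L n) :=
  tsum_eq_single n fun _ hmn => h0 _ _ (le_abs_sub_chainCenter hL hmn hx)

lemma isBounded_graph_tube {u : ℝ → ℝ} (hu : Continuous u) (a b r : ℝ) :
    Bornology.IsBounded {q : EucN 2 | q 0 ∈ Icc a b ∧ |q 1 - u (q 0)| ≤ r} := by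
  have hcompact : IsCompact ((fun z : ℝ × ℝ => pt2 z.1 (u z.1 + z.2)) '' Icc a b ×ˢ Icc (-r) r) :=
    (isCompact_Icc.prod isCompact_Icc).image
      (continuous_pt2.comp (f := fun z : ℝ × ℝ => (z.1, u z.1 + z.2)) (by fun_prop))
  refine hcompact.isBounded.subset fun q hq => ⟨(q 0, q 1 - u (q 0)), ⟨hq.1, abs_le.1 hq.2⟩, ?_⟩
  simp only [add_sub_cancel, pt2_eta]

variable {B : ℕ → Set (EucN 2)} {r : ℕ → ℝ}

lemma mem_chain_cases (hB : ∀ n, ∀ q ∈ B n, |q 1 - h n (q 0)| ≤ r n) {q : EucN 2}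
    (hq : q ∈ chain B L) : (q 0 < 0 ∧ |q 1| < 1 / 2) ∨
      ∃ n, |q 0 - chainCenter L n| ≤ L n ∧ |q 1 - h n (q 0 - chainCenter L n)| ≤ r n := by
  rcases hq with ⟨hq0, hq1⟩ | hq
  · exact .inl ⟨hq0, abs_lt.2 hq1⟩
  · obtain ⟨n, q, ⟨hqB, hqL⟩, rfl⟩ := mem_iUnion.1 hq
    refine .inr ⟨n, ?_⟩
    simp only [add_smul_pt2_apply_zero, add_smul_pt2_apply_one, add_sub_cancel_right]
    exact ⟨abs_le.2 hqL, hB n q hqB⟩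

lemma exists_radius_abs_sub_chainProfile_lt (hL : ∀ n, 0 ≤ L n) (hh : ∀ n, Continuous (h n))
    (h0 : ∀ n t, L n ≤ |t| → h n t = 0) (hB : ∀ n, ∀ q ∈ B n, |q 1 - h n (q 0)| ≤ r n)
    (hr : Tendsto r atTop (𝓝 (1 / 2))) {ℓ : ℝ} (hℓ : 1 < ℓ) :
    ∃ R, ∀ q ∈ chain B L, R < ‖q‖ → |q 1 - chainProfile h L (q 0)| < ℓ / 2 := by
  obtain ⟨m, hm⟩ := eventually_atTop.1 (hr.eventually_lt_const (by linarith : 1 / 2 < ℓ / 2))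
  let block (n : ℕ) : Set (EucN 2) :=
    {q | q 0 ∈ Icc (chainCenter L n - L n) (chainCenter L n + L n) ∧
      |q 1 - h n (q 0 - chainCenter L n)| ≤ r n}
  have hbdd : Bornology.IsBounded (⋃ n ∈ Finset.range m, block n) :=
    (Bornology.isBounded_biUnion_finset _).2 fun n _ =>
      isBounded_graph_tube (u := fun x => h n (x - chainCenter L n))
        ((hh n).comp (by fun_prop)) _ _ (r n)
  obtain ⟨R, hR⟩ := hbdd.exists_norm_le
  refine ⟨R, fun q hq hqR => ?_⟩
  rcases mem_chain_cases hB hq with ⟨hq0, hq1⟩ | ⟨n, hq0, hq1⟩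
  · rw [chainProfile_of_neg hL h0 hq0, sub_zero]
    linarith
  · rw [chainProfile_of_abs_sub_le hL h0 hq0]
    refine hq1.trans_lt (hm n (not_lt.1 fun hnm => hqR.not_ge (hR q ?_)))
    rw [abs_le] at hq0
    exact mem_biUnion (Finset.mem_range.2 hnm)
      ⟨⟨by linarith, by linarith⟩, hq1⟩

variable {p : ℝ}

lemma Einfty_chain (hp : 1 ≤ p) (hL : ∀ n, 0 ≤ L n) (hh : ∀ n, Continuous (h n))
    (h0 : ∀ n t, L n ≤ |t| → h n t = 0) (hB : ∀ n, ∀ q ∈ B n, |q 1 - h n (q 0)| ≤ r n)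
    (hr : Tendsto r atTop (𝓝 (1 / 2))) : Einfty 2 p hp (chain B L) = piPow p hp :=
  le_antisymm (Einfty_le_piPow hp subset_union_left)
    (piPow_le_Einfty hp (chainProfile h L) fun _ hℓ =>
      exists_radius_abs_sub_chainProfile_lt hL hh h0 hB hr hℓ)

lemma IsTestFun.comp_sub {N : ℕ} {Ω : Set (EucN N)} {ψ : EucN N → ℝ} (hψ : IsTestFun Ω ψ)
    (v : EucN N) : IsTestFun ((fun x => x + v) '' Ω) fun x => ψ (x - v) := by
  have hcont : Continuous fun x => x - v := by fun_prop
  refine ⟨hψ.1.comp (by fun_prop), hψ.2.1.comp_homeomorph (Homeomorph.subRight v), fun x hx => ?_⟩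
  exact ⟨x - v, hψ.2.2 (tsupport_comp_subset_preimage ψ hcont hx), sub_add_cancel x v⟩

lemma exists_isTestFun_chain_integral_lt (hp : 1 ≤ p) {n : ℕ} {c : ℝ}
    (hc : lambda1p 2 p hp (B n ∩ {q | q 0 ∈ Ioo (-(L n)) (L n)}) < ENNReal.ofReal c) :
    ∃ ψ, IsTestFun (chain B L) ψ ∧ tsupport ψ ⊆ {q | |q 0 - chainCenter L n| < L n} ∧
      ∫ x, ‖fderiv ℝ ψ x‖ ^ p < c * ∫ x, |ψ x| ^ p := by
  obtain ⟨ψ, hψ, hlt⟩ := exists_isTestFun_integral_lt hp hc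
  obtain ⟨hsmooth, hcompact, hsupp⟩ := hψ.comp_sub (chainCenter L n • pt2 1 0)
  refine ⟨_, ⟨hsmooth, hcompact, hsupp.trans (.trans ?_ subset_union_right)⟩, hsupp.trans ?_, ?_⟩
  · exact subset_iUnion_of_subset n (image_mono
      (inter_subset_inter_right _ fun q hq => Ioo_subset_Icc_self hq))
  · rintro _ ⟨q, ⟨-, hq⟩, rfl⟩
    rw [mem_ofPred_eq, add_smul_pt2_apply_zero, add_sub_cancel_right]
    exact abs_lt.2 hq
  · simp only [fderiv_comp_sub]
    rwa [integral_sub_right_eq_self fun x => ‖fderiv ℝ ψ x‖ ^ p,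
      integral_sub_right_eq_self fun x => |ψ x| ^ p]

lemma lambdaLS_chain_lt (hp : 1 ≤ p) (hL : ∀ n, 0 ≤ L n) {Λ : ℝ≥0∞}
    (hB : ∀ n, lambda1p 2 p hp (B n ∩ {q | q 0 ∈ Ioo (-(L n)) (L n)}) < Λ) (k : ℕ) :
    lambdaLS 2 p hp (chain B L) k < Λ := by
  have hsup : (Finset.univ.sup fun i : Fin k =>
      lambda1p 2 p hp (B i ∩ {q | q 0 ∈ Ioo (-(L i)) (L i)})) < Λ :=
    (Finset.sup_lt_iff (bot_le.trans_lt (hB 0))).2 fun i _ => hB i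
  obtain ⟨c, -, hc, hcΛ⟩ := ENNReal.lt_iff_exists_real_btwn.1 hsup
  choose ψ hψ hsupp hlt using fun i : Fin k =>
    exists_isTestFun_chain_integral_lt hp ((Finset.le_sup (Finset.mem_univ i)).trans_lt hc)
  refine (lambdaLS_le_of_pairwise_disjoint hp hψ (fun i j hij => ?_) (fun i => ?_)
    fun i => (hlt i).le).trans_lt hcΛ
  · refine disjoint_left.2 fun q hqi hqj => ?_
    have hlt_i : |q 0 - chainCenter L i| < L i := hsupp i hqi
    have hlt_j : |q 0 - chainCenter L j| < L j := hsupp j hqj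
    exact hlt_i.not_ge (le_abs_sub_chainCenter hL (Fin.val_ne_of_ne hij) hlt_j.le)
  · refine (integral_nonneg fun x => by positivity).lt_of_ne fun hzero => (hlt i).not_ge ?_
    rw [← hzero, mul_zero]
    exact integral_nonneg fun x => by positivity

end Chain

section Whip

lemma whipCurve_apply_zero (n : ℕ) (t : ℝ) : whipCurve n t 0 = t := by
  unfold whipCurve
  split_ifs <;> exact pt2_apply_zero _ _

lemma whipCurve_apply_one_of_pi_le (n : ℕ) {t : ℝ} (ht : Real.pi ≤ |t|) : whipCurve n t 1 = 0 := by
  rw [whipCurve, if_neg ht.not_gt, pt2_apply_one]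

-- The cut-off of `(1 + cos t) / (n + 1)` at `±π` amounts to clamping `t`, as `1 + cos (±π) = 0`.
lemma whipCurve_apply_one_eq_clamp (n : ℕ) (t : ℝ) :
    whipCurve n t 1 = (1 + Real.cos (max (-Real.pi) (min Real.pi t))) / (n + 1) := by
  have hpi := Real.pi_pos
  rcases lt_or_ge |t| Real.pi with ht | ht
  · rw [whipCurve, if_pos ht, pt2_apply_one, min_eq_right (abs_lt.1 ht).2.le,
      max_eq_right (abs_lt.1 ht).1.le]
  · rw [whipCurve_apply_one_of_pi_le n ht]
    rcases le_abs.1 ht with h | h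
    · rw [min_eq_left h, max_eq_right (by linarith), Real.cos_pi, add_neg_cancel, zero_div]
    · rw [min_eq_right (by linarith), max_eq_left (by linarith), Real.cos_neg, Real.cos_pi,
        add_neg_cancel, zero_div]

lemma abs_whipCurve_apply_one_sub_le (n : ℕ) (s t : ℝ) :
    |whipCurve n s 1 - whipCurve n t 1| ≤ 1 / (n + 1) * |s - t| := by
  have hlip : LipschitzWith 1 fun t => Real.cos (max (-Real.pi) (min Real.pi t)) := by
    have h := Real.lipschitzWith_cos.comp
      ((LipschitzWith.id.const_min Real.pi).const_max (-Real.pi))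
    rwa [mul_one] at h
  have hcos := hlip.dist_le_mul s t
  rw [NNReal.coe_one, one_mul, Real.dist_eq, Real.dist_eq] at hcos
  rw [whipCurve_apply_one_eq_clamp, whipCurve_apply_one_eq_clamp, ← sub_div,
    add_sub_add_left_eq_sub, abs_div, abs_of_pos (by positivity : (0 : ℝ) < n + 1),
    one_div_mul_eq_div]
  exact div_le_div_of_nonneg_right hcos (by positivity)

lemma continuous_whipCurve_apply_one (n : ℕ) : Continuous fun t => whipCurve n t 1 := by
  simp only [whipCurve_apply_one_eq_clamp]
  fun_prop

lemma abs_add_smul_apply_one_sub_le {u : ℝ → ℝ} {K ρ t : ℝ} (hK : 0 ≤ K)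
    (hu : ∀ x y, |u x - u y| ≤ K * |x - y|) {c v : EucN 2} (hc : c 1 = u (c 0)) (hv : ‖v‖ ≤ 1)
    (ht : |t| ≤ ρ) : |(c + t • v) 1 - u ((c + t • v) 0)| ≤ (1 + K) * ρ := by
  have hdist (i : Fin 2) : |(c + t • v) i - c i| ≤ ρ := by
    rw [PiLp.add_apply, add_sub_cancel_left, PiLp.smul_apply, smul_eq_mul, abs_mul]
    exact (mul_le_of_le_one_right (abs_nonneg t) ((PiLp.norm_apply_le v i).trans hv)).trans ht
  calc |(c + t • v) 1 - u ((c + t • v) 0)|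
      ≤ |(c + t • v) 1 - c 1| + |u (c 0) - u ((c + t • v) 0)| := hc ▸ abs_sub_le _ _ _
    _ ≤ ρ + K * ρ := by
        refine add_le_add (hdist 1) ((hu _ _).trans (mul_le_mul_of_nonneg_left ?_ hK))
        rw [abs_sub_comm]
        exact hdist 0
    _ = (1 + K) * ρ := by ring

lemma abs_sub_whipCurve_le_of_mem_tube {n : ℕ} {Γ ν : ℝ → EucN 2} {φ : ℝ → ℝ}
    (hΓ : ∀ s, Γ s = whipCurve n (φ s)) (hν : ∀ s, ‖ν s‖ ≤ 1) :
    ∀ q ∈ {q | ∃ s t : ℝ, t ∈ Ioo (-(1/2)) (1/2) ∧ q = Γ s + t • ν s},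
      |q 1 - whipCurve n (q 0) 1| ≤ (1 + 1 / ((n : ℝ) + 1)) * (1 / 2) := by
  rintro _ ⟨s, t, ht, rfl⟩
  rw [hΓ]
  exact abs_add_smul_apply_one_sub_le (by positivity) (abs_whipCurve_apply_one_sub_le n)
    (by rw [whipCurve_apply_zero]) (hν s) (abs_lt.2 ht).le

lemma tendsto_one_add_one_div_mul_half :
    Tendsto (fun n : ℕ => (1 + 1 / ((n : ℝ) + 1)) * (1 / 2)) atTop (𝓝 (1 / 2)) := by
  have h := (tendsto_one_div_add_atTop_nhds_zero_nat (𝕜 := ℝ)).const_add 1 |>.mul_const (1 / 2)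
  rwa [add_zero, one_mul] at h

end Whip

theorem statement16_general {p : ℝ} (hp : 1 ≤ p) {L : ℕ → ℝ} (hL : ∀ n, 0 ≤ L n)
    {h : ℕ → ℝ → ℝ} (hh : ∀ n, Continuous (h n)) (h0 : ∀ n t, L n ≤ |t| → h n t = 0)
    {B : ℕ → Set (EucN 2)} {r : ℕ → ℝ} (hB : ∀ n, ∀ q ∈ B n, |q 1 - h n (q 0)| ≤ r n)
    (hr : Tendsto r atTop (𝓝 (1 / 2)))
    (hsmall : ∀ n, lambda1p 2 p hp (B n ∩ {q | q 0 ∈ Ioo (-(L n)) (L n)}) < piPow p hp) :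
    Einfty 2 p hp (chain B L) = piPow p hp ∧
      ∀ k, lambdaLS 2 p hp (chain B L) k < piPow p hp :=
  ⟨Einfty_chain hp hL hh h0 hB hr, lambdaLS_chain_lt hp hL hsmall⟩

theorem statement16 (p : ℝ) (hp1 : 1 < p)
    (Γ Γ' ν : ℕ → ℝ → EucN 2) (φ : ℕ → ℝ → ℝ)
    (hΓ0 : ∀ n, Γ n 0 = whipCurve n 0)
    (hφ : ∀ n, StrictMono (φ n) ∧ φ n 0 = 0 ∧ Function.Surjective (φ n))
    (hrepar : ∀ n s, Γ n s = whipCurve n (φ n s))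
    (hderiv : ∀ n s, HasDerivAt (Γ n) (Γ' n s) s)
    (hunit : ∀ n s, ‖Γ' n s‖ = 1)
    (hν : ∀ n s, ‖ν n s‖ = 1 ∧ ⟪ν n s, Γ' n s⟫ = 0)
    (L : ℕ → ℝ) (hL : ∀ n, Real.pi < L n)
    (hsmall : ∀ n, lambda1p 2 p hp1.le
        ({q | ∃ s t : ℝ, t ∈ Ioo (-(1/2) : ℝ) (1/2) ∧ q = Γ n s + t • ν n s} ∩
          {q : EucN 2 | q 0 ∈ Ioo (-(L n)) (L n)}) <
      lambda1p 1 p hp1.le {x : EucN 1 | x 0 ∈ Ioo (-(1/2) : ℝ) (1/2)}) :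
    Einfty 2 p hp1.le
        ({q : EucN 2 | q 0 < 0 ∧ q 1 ∈ Ioo (-(1/2) : ℝ) (1/2)} ∪
          ⋃ n : ℕ, (fun q => q + (2 * (∑ i ∈ Finset.range n, L i) + L n) • pt2 1 0) ''
            ({q | ∃ s t : ℝ, t ∈ Ioo (-(1/2) : ℝ) (1/2) ∧ q = Γ n s + t • ν n s} ∩
              {q : EucN 2 | q 0 ∈ Icc (-(L n)) (L n)})) =
      lambda1p 1 p hp1.le {x : EucN 1 | x 0 ∈ Ioo (-(1/2) : ℝ) (1/2)} ∧
    ∀ k : ℕ, k ≠ 0 →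
      lambdaLS 2 p hp1.le
          ({q : EucN 2 | q 0 < 0 ∧ q 1 ∈ Ioo (-(1/2) : ℝ) (1/2)} ∪
            ⋃ n : ℕ, (fun q => q + (2 * (∑ i ∈ Finset.range n, L i) + L n) • pt2 1 0) ''
              ({q | ∃ s t : ℝ, t ∈ Ioo (-(1/2) : ℝ) (1/2) ∧ q = Γ n s + t • ν n s} ∩
                {q : EucN 2 | q 0 ∈ Icc (-(L n)) (L n)})) k <
        lambda1p 1 p hp1.le {x : EucN 1 | x 0 ∈ Ioo (-(1/2) : ℝ) (1/2)} := by
  have h := statement16_general hp1.le (fun n => Real.pi_pos.le.trans (hL n).le)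
    continuous_whipCurve_apply_one
    (fun n t ht => whipCurve_apply_one_of_pi_le n ((hL n).le.trans ht))
    (fun n => abs_sub_whipCurve_le_of_mem_tube (hrepar n) fun s => (hν n s).1.le)
    tendsto_one_add_one_div_mul_half hsmall
  exact ⟨h.1, fun k _ => h.2 k⟩

end
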